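/- arXiv:1801.07305 — 3 statements merged into one kernel-verified Lean document; each statement's English description precedes it below -/
import Mathlib

section
/- Let R ⊂ A be a Frobenius extension of rings and let M be a left A-module. If the Gorenstein projective dimension of M over A is finite, then G-pd_A M = G-pd_R M, where on the right M is viewed as a left R-module by restriction of scalars. -/
universe u

section Frobenius

variable {R A : Type u} [Ring R] [Ring A]

/-- A ring extension `ι : R →+* A` (an injective ring homomorphism) is a Frobenius extension
if there is an `R`-`R`-bimodule homomorphism `τ : A → R` together with dual bases
`x i`, `y i` in `A`. -/
def IsFrobeniusExtension (ι : R →+* A) : Prop :=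
  Function.Injective ι ∧
  ∃ (τ : A →+ R) (n : ℕ) (x y : Fin n → A),
    (∀ (r : R) (a : A), τ (ι r * a) = r * τ a) ∧
    (∀ (a : A) (r : R), τ (a * ι r) = τ a * r) ∧
    (∀ a : A, ∑ i, x i * ι (τ (y i * a)) = a) ∧
    (∀ a : A, ∑ i, ι (τ (a * x i)) * y i = a)

end Frobenius

/-- A left `R`-module `M` is Gorenstein projective if it is a syzygy of a totally acyclic
complex of projective modules: there is an acyclic complex `⋯ → P₁ → P₀ → P₋₁ → ⋯` of
projective `R`-modules which stays acyclic after applying `Hom_R(-, Q)` for every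
projective `R`-module `Q`, with `M ≅ ker (P₀ → P₋₁)`. -/
def IsGorensteinProjective (R : Type u) [Ring R] (M : ModuleCat.{u} R) : Prop :=
  ∃ (P : ℤ → ModuleCat.{u} R) (f : ∀ i : ℤ, P (i + 1) →ₗ[R] P i),
    (∀ i, Module.Projective R (P i)) ∧
    (∀ i, (f i).comp (f (i + 1)) = 0) ∧
    (∀ i, LinearMap.range (f (i + 1)) = LinearMap.ker (f i)) ∧
    (∀ Q : ModuleCat.{u} R, Module.Projective R Q →
      ∀ (i : ℤ) (g : P (i + 1) →ₗ[R] Q), g.comp (f (i + 1)) = 0 →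
        ∃ h : P i →ₗ[R] Q, h.comp (f i) = g) ∧
    Nonempty (↥M ≃ₗ[R] ↥(LinearMap.ker (f (-1))))

/-- `GPdimLE R n M` means that `M` admits a Gorenstein projective resolution of length `n`,
i.e. an exact sequence `0 → G_n → ⋯ → G₁ → G₀ → M → 0` with all `G_i` Gorenstein
projective. -/
def GPdimLE (R : Type u) [Ring R] : ℕ → ModuleCat.{u} R → Prop
  | 0, M => IsGorensteinProjective R M
  | n + 1, M => ∃ (G : ModuleCat.{u} R) (f : G →ₗ[R] M),
      Function.Surjective f ∧ IsGorensteinProjective R G ∧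
      GPdimLE R n (ModuleCat.of R ↥(LinearMap.ker f))

/-- The Gorenstein projective dimension of a left `R`-module, in `ℕ∞`. -/
noncomputable def GPdim (R : Type u) [Ring R] (M : ModuleCat.{u} R) : ℕ∞ :=
  sInf {k : ℕ∞ | ∃ n : ℕ, k = (n : ℕ∞) ∧ GPdimLE R n M}

universe w w'

open CategoryTheory Limits Abelian

/-!
An object `X` of finite Gorenstein projective dimension has dimension at most `m` if and only if
`Ext^k(X, Q) = 0` for all `k > m` and all projective `Q`. The heart of this is that the cokernel of
a monomorphism between Gorenstein projective objects is Gorenstein projective as soon as its `Ext¹`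
into projective objects vanishes.

For a Frobenius extension, coextension of scalars `G` is adjoint to restriction `F` on both sides.
So `F` and `G` are exact and preserve projective objects, and `Ext_R(F X, Q) = Ext_A(X, G Q)`. Thus
`Ext_A`-vanishing of `X` against projectives passes to `F X`, and with it Gorenstein projectivity.
Conversely, since `F` is faithful, a projective `A`-module `Q` is a retract of `G (F Q)`, so the
vanishing over `R` forces the vanishing over `A`. The criterion therefore holds for `M` over `A` and
over `R` with the same `m`.
-/

section ShortExact

variable {C : Type*} [Category* C] [Abelian C]

lemma shortExact_cokernel {X Y : C} (f : X ⟶ Y) [Mono f] :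
    (ShortComplex.mk f (cokernel.π f) (cokernel.condition f)).ShortExact where
  exact := ShortComplex.exact_cokernel f

lemma shortExact_kernel {X Y : C} (f : X ⟶ Y) [Epi f] :
    (ShortComplex.mk (kernel.ι f) f (kernel.condition f)).ShortExact where
  exact := ShortComplex.exact_kernel f

lemma exists_shortExact_projective [EnoughProjectives C] (X : C) :
    ∃ S : ShortComplex C, S.ShortExact ∧ Projective S.X₂ ∧ S.X₃ = X :=
  ⟨_, shortExact_kernel (Projective.π X), inferInstance, rfl⟩

lemma shortExact_biprod_inr_fst (X Y : C) :
    (ShortComplex.mk (biprod.inr : Y ⟶ X ⊞ Y) biprod.fst biprod.inr_fst).ShortExact :=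
  ShortComplex.Splitting.shortExact
    { r := biprod.snd
      s := biprod.inl
      id := (add_comm _ _).trans biprod.total }

lemma shortExact_cokernel_map_comp {X Y Z : C} (f : X ⟶ Y) (g : Y ⟶ Z) [Mono g] :
    (ShortComplex.mk (cokernel.map f (f ≫ g) (𝟙 X) g (by simp))
      (cokernel.map (f ≫ g) g f (𝟙 Z) (by simp)) (by ext; simp)).ShortExact := by
  have hexact := kernelCokernelCompSequence_exact f g
  have hδ : kernelCokernelCompSequence.δ f g = 0 := by
    rw [kernelCokernelCompSequence.δ_fac, kernel.ι_of_mono]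
    simp
  have : Mono (cokernel.map f (f ≫ g) (𝟙 X) g (by simp)) := (hexact.exact 2).mono_g hδ
  exact { exact := hexact.exact 3 }

lemma exists_shortExact_of_comp {X Y Z U V : C} {f : X ⟶ Y} {p : Y ⟶ U} {g : Y ⟶ Z} {q : Z ⟶ V}
    {hfp : f ≫ p = 0} {hgq : g ≫ q = 0} (hf : (ShortComplex.mk f p hfp).ShortExact)
    (hg : (ShortComplex.mk g q hgq).ShortExact) :
    ∃ (a : U ⟶ cokernel (f ≫ g)) (b : cokernel (f ≫ g) ⟶ V) (hab : a ≫ b = 0),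
      (ShortComplex.mk a b hab).ShortExact := by
  have : Mono g := hg.mono_f
  let eU : cokernel f ≅ U := (cokernelIsCokernel f).coconePointUniqueUpToIso hf.gIsCokernel
  let eV : cokernel g ≅ V := (cokernelIsCokernel g).coconePointUniqueUpToIso hg.gIsCokernel
  let T₀ := ShortComplex.mk (cokernel.map f (f ≫ g) (𝟙 X) g (by simp))
    (cokernel.map (f ≫ g) g f (𝟙 Z) (by simp)) (by ext; simp)
  let T := ShortComplex.mk (eU.inv ≫ T₀.f) (T₀.g ≫ eV.hom) (by simp [reassoc_of% T₀.zero])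
  let e : T₀ ≅ T := ShortComplex.isoMk eU (Iso.refl _) eV (by simp [T]) (by simp [T])
  exact ⟨T.f, T.g, T.zero, ShortComplex.shortExact_of_iso e (shortExact_cokernel_map_comp f g)⟩

lemma shortExact_biprod_map_id {S : ShortComplex C} (hS : S.ShortExact) (P : C) :
    (ShortComplex.mk (biprod.map (𝟙 P) S.f) (biprod.snd ≫ S.g) (by simp)).ShortExact := by
  have : Mono S.f := hS.mono_f
  have : Epi S.g := hS.epi_g
  refine { exact := ShortComplex.exact_of_g_is_cokernel _ ?_ }
  refine CokernelCofork.IsColimit.ofπ' _ _ fun {T} t ht ↦ ?_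
  have hinl : biprod.inl ≫ t = 0 := by simpa using biprod.inl ≫= ht
  have hinr : S.f ≫ biprod.inr ≫ t = 0 := by simpa using biprod.inr ≫= ht
  refine ⟨hS.exact.desc _ hinr, ?_⟩
  ext
  · simp [hinl]
  · simp

lemma exists_shortExact_biprod_lift {S : ShortComplex C} (hS : S.ShortExact) {P W : C}
    {θ : S.X₂ ⟶ P} {π : P ⟶ W} {hπ : (S.f ≫ θ) ≫ π = 0}
    (hT : (ShortComplex.mk (S.f ≫ θ) π hπ).ShortExact) :
    ∃ (q : P ⊞ S.X₃ ⟶ W) (hq : biprod.lift θ S.g ≫ q = 0),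
      (ShortComplex.mk (biprod.lift θ S.g) q hq).ShortExact := by
  have : Mono S.f := hS.mono_f
  have : Epi S.g := hS.epi_g
  have : Epi π := hT.epi_g
  have : Mono (S.f ≫ θ) := hT.mono_f
  obtain ⟨γ, hγ⟩ : ∃ γ : S.X₃ ⟶ W, S.g ≫ γ = θ ≫ π :=
    ⟨hS.exact.desc (θ ≫ π) (by simpa using hπ), hS.exact.g_desc _ _⟩
  have hzero : biprod.lift θ S.g ≫ biprod.desc π (-γ) = 0 := by simp [hγ]
  have : Mono (biprod.lift θ S.g) := by
    refine Preadditive.mono_of_cancel_zero _ fun {T} a ha ↦ ?_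
    have haθ : a ≫ θ = 0 := by simpa using ha =≫ biprod.fst
    have hag : a ≫ S.g = 0 := by simpa using ha =≫ biprod.snd
    obtain ⟨b, rfl⟩ := hS.exact.lift' a hag
    rw [Category.assoc] at haθ
    rw [zero_of_comp_mono _ haθ, zero_comp]
  have : Epi (biprod.desc π (-γ)) := epi_of_epi_fac (biprod.inl_desc π (-γ))
  refine ⟨biprod.desc π (-γ), hzero, { exact := ShortComplex.exact_of_g_is_cokernel _ ?_ }⟩
  refine CokernelCofork.IsColimit.ofπ' _ _ fun {T} t ht ↦ ?_
  have hsum : θ ≫ biprod.inl ≫ t + S.g ≫ biprod.inr ≫ t = 0 := by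
    simpa [biprod.lift_eq] using ht
  have hinl : (S.f ≫ θ) ≫ biprod.inl ≫ t = 0 := by
    simpa using S.f ≫= hsum
  refine ⟨hT.exact.desc _ hinl, ?_⟩
  have hdesc : π ≫ hT.exact.desc _ hinl = biprod.inl ≫ t := hT.exact.g_desc _ _
  ext
  · simp [hdesc]
  · rw [← cancel_epi S.g]
    simp [reassoc_of% hγ, hdesc, eq_neg_of_add_eq_zero_right hsum]

end ShortExact

section ExtProjectiveVanishing

variable {C : Type*} [Category* C] [Abelian C] [HasExt.{w} C]

/-- `extProjectiveVanishing k X` says that `Ext^k(X, Q) = 0` for every projective object `Q`. -/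
def extProjectiveVanishing (k : ℕ) : ObjectProperty C :=
  fun X ↦ ∀ (Q : C) [Projective Q] (e : Ext X Q k), e = 0

namespace extProjectiveVanishing

lemma of_projective (P : C) [Projective P] (k : ℕ) : extProjectiveVanishing (k + 1) P :=
  fun _ _ e ↦ e.eq_zero_of_projective

instance (k : ℕ) : (extProjectiveVanishing (C := C) k).IsClosedUnderIsomorphisms where
  of_iso i hX Q _ e := by
    rw [← Ext.mk₀_id_comp e, ← i.inv_hom_id, ← Ext.mk₀_comp_mk₀_assoc,
      hX Q ((Ext.mk₀ i.hom).comp e (zero_add k)), Ext.comp_zero]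

variable {S : ShortComplex C} {k : ℕ}

lemma X₁ (hS : S.ShortExact) (h₂ : extProjectiveVanishing k S.X₂)
    (h₃ : extProjectiveVanishing (k + 1) S.X₃) : extProjectiveVanishing k S.X₁ := by
  intro Q _ e
  obtain ⟨e', rfl⟩ := Ext.contravariant_sequence_exact₁ hS Q e (add_comm 1 k) (h₃ Q _)
  rw [h₂ Q e', Ext.comp_zero]

lemma X₂ (hS : S.ShortExact) (h₁ : extProjectiveVanishing k S.X₁)
    (h₃ : extProjectiveVanishing k S.X₃) : extProjectiveVanishing k S.X₂ := by
  intro Q _ e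
  obtain ⟨e', rfl⟩ := Ext.contravariant_sequence_exact₂ hS Q e (h₁ Q _)
  rw [h₃ Q e', Ext.comp_zero]

lemma X₃ (hS : S.ShortExact) (h₁ : extProjectiveVanishing k S.X₁)
    (h₂ : extProjectiveVanishing (k + 1) S.X₂) : extProjectiveVanishing (k + 1) S.X₃ := by
  intro Q _ e
  obtain ⟨e', rfl⟩ := Ext.contravariant_sequence_exact₃ hS Q e (h₂ Q _) (add_comm 1 k)
  rw [h₁ Q e', Ext.comp_zero]

lemma dimension_shift (hS : S.ShortExact) [Projective S.X₂] :
    extProjectiveVanishing (k + 2) S.X₃ ↔ extProjectiveVanishing (k + 1) S.X₁ :=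
  ⟨X₁ hS (of_projective _ _), fun h ↦ X₃ hS h (of_projective _ _)⟩

lemma exists_extension (hS : S.ShortExact) (h₃ : extProjectiveVanishing 1 S.X₃) {Q : C}
    [Projective Q] (φ : S.X₁ ⟶ Q) : ∃ ψ : S.X₂ ⟶ Q, S.f ≫ ψ = φ := by
  obtain ⟨e, he⟩ :=
    Ext.contravariant_sequence_exact₁ hS Q (Ext.mk₀ φ) (add_comm 1 0) (h₃ Q _)
  obtain ⟨ψ, rfl⟩ := (Ext.mk₀_bijective _ _).surjective e
  rw [Ext.mk₀_comp_mk₀] at he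
  exact ⟨ψ, (Ext.mk₀_bijective _ _).injective he⟩

lemma one_iff_exists_extension (hS : S.ShortExact) [Projective S.X₂] :
    extProjectiveVanishing 1 S.X₃ ↔
      ∀ (Q : C) [Projective Q] (φ : S.X₁ ⟶ Q), ∃ ψ : S.X₂ ⟶ Q, S.f ≫ ψ = φ := by
  refine ⟨fun h Q _ φ ↦ exists_extension hS h φ, fun h Q _ e ↦ ?_⟩
  obtain ⟨e, rfl⟩ := Ext.contravariant_sequence_exact₃ hS Q e
    (of_projective S.X₂ 0 Q _) (add_comm 1 0)
  obtain ⟨φ, rfl⟩ := (Ext.mk₀_bijective _ _).surjective e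
  obtain ⟨ψ, rfl⟩ := h Q φ
  rw [← Ext.mk₀_comp_mk₀]
  exact hS.extClass_comp_assoc _

end extProjectiveVanishing

end ExtProjectiveVanishing

section GorensteinProjective

variable {C : Type*} [Category* C] [Abelian C] [HasExt.{w} C]

/-- A class of objects is totally coresolving if each member `X` satisfies `Ext^k(X, Q) = 0` for
all `k ≥ 1` and all projective objects `Q`, and embeds into a projective object with cokernel
again in the class. -/
def IsTotallyCoresolving (𝒳 : ObjectProperty C) : Prop :=
  ∀ X, 𝒳 X → (∀ k, extProjectiveVanishing (k + 1) X) ∧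
    ∃ (P Z : C) (j : X ⟶ P) (q : P ⟶ Z) (hjq : j ≫ q = 0),
      Projective P ∧ (ShortComplex.mk j q hjq).ShortExact ∧ 𝒳 Z

/-- An object is Gorenstein projective if it lies in some totally coresolving class. If there are
enough projective objects, then these are exactly the syzygies of totally acyclic complexes: the
left half of such a complex is an arbitrary projective resolution. -/
def gorensteinProjective : ObjectProperty C :=
  fun X ↦ ∃ 𝒳 : ObjectProperty C, IsTotallyCoresolving 𝒳 ∧ 𝒳 X

lemma isTotallyCoresolving_gorensteinProjective :
    IsTotallyCoresolving (gorensteinProjective : ObjectProperty C) := by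
  rintro X ⟨𝒳, h𝒳, hX⟩
  obtain ⟨hvan, P, Z, j, q, hjq, hP, hS, hZ⟩ := h𝒳 X hX
  exact ⟨hvan, P, Z, j, q, hjq, hP, hS, 𝒳, h𝒳, hZ⟩

namespace gorensteinProjective

protected lemma extProjectiveVanishing {X : C} (hX : gorensteinProjective X) (k : ℕ) :
    extProjectiveVanishing (k + 1) X :=
  (isTotallyCoresolving_gorensteinProjective X hX).1 k

lemma exists_coresolution {X : C} (hX : gorensteinProjective X) :
    ∃ (P Z : C) (j : X ⟶ P) (q : P ⟶ Z) (hjq : j ≫ q = 0),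
      Projective P ∧ (ShortComplex.mk j q hjq).ShortExact ∧ gorensteinProjective Z :=
  (isTotallyCoresolving_gorensteinProjective X hX).2

variable {S : ShortComplex C}

lemma of_coresolution (hS : S.ShortExact) [Projective S.X₂]
    (h₁ : ∀ k, extProjectiveVanishing (k + 1) S.X₁) (h₃ : gorensteinProjective S.X₃) :
    gorensteinProjective S.X₁ := by
  refine ⟨fun Y ↦ gorensteinProjective Y ∨ Y = S.X₁, ?_, Or.inr rfl⟩
  rintro Y (hY | rfl)
  · obtain ⟨P, Z, j, q, hjq, hP, hT, hZ⟩ := hY.exists_coresolution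
    exact ⟨hY.extProjectiveVanishing, P, Z, j, q, hjq, hP, hT, Or.inl hZ⟩
  · exact ⟨h₁, S.X₂, S.X₃, S.f, S.g, S.zero, inferInstance, hS, Or.inl h₃⟩

lemma X₁_of_projective (hS : S.ShortExact) [Projective S.X₂] (h₃ : gorensteinProjective S.X₃) :
    gorensteinProjective S.X₁ :=
  of_coresolution hS (fun _ ↦ (extProjectiveVanishing.dimension_shift hS).1
    (h₃.extProjectiveVanishing _)) h₃

lemma of_projective (P : C) [Projective P] : gorensteinProjective P := by
  refine ⟨fun Q ↦ Projective Q, fun Q hQ ↦ ⟨extProjectiveVanishing.of_projective Q, ?_⟩, ‹_›⟩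
  have : Projective (cokernel (𝟙 Q)) := (isZero_cokernel_of_epi (𝟙 Q)).projective
  exact ⟨Q, _, 𝟙 Q, _, _, hQ, shortExact_cokernel (𝟙 Q), this⟩

instance : (gorensteinProjective : ObjectProperty C).IsClosedUnderIsomorphisms where
  of_iso {X Y} i hX := by
    obtain ⟨P, Z, j, q, hjq, hP, hS, hZ⟩ := hX.exists_coresolution
    let T := ShortComplex.mk (i.inv ≫ j) q (by simp [hjq])
    let e : ShortComplex.mk j q hjq ≅ T :=
      ShortComplex.isoMk i (Iso.refl _) (Iso.refl _) (by simp [T]) (by simp [T])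
    have : Projective T.X₂ := hP
    exact of_coresolution (ShortComplex.shortExact_of_iso e hS)
      (fun k ↦ ObjectProperty.prop_of_iso _ i (hX.extProjectiveVanishing k)) hZ

lemma biprod_of_projective (P : C) [Projective P] {X : C} (hX : gorensteinProjective X) :
    gorensteinProjective (P ⊞ X) := by
  obtain ⟨P', Z, j, q, hjq, hP', hS, hZ⟩ := hX.exists_coresolution
  refine of_coresolution (shortExact_biprod_map_id hS P) (fun k ↦ ?_) hZ
  exact extProjectiveVanishing.X₂ (shortExact_biprod_inr_fst P X) (hX.extProjectiveVanishing k)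
    (extProjectiveVanishing.of_projective P k)

instance : (gorensteinProjective : ObjectProperty C).IsClosedUnderExtensions where
  prop_X₂_of_shortExact {S} hS h₁ h₃ := by
    refine ⟨fun Y ↦ ∃ T : ShortComplex C, T.ShortExact ∧ gorensteinProjective T.X₁ ∧
      gorensteinProjective T.X₃ ∧ T.X₂ = Y, ?_, S, hS, h₁, h₃, rfl⟩
    rintro _ ⟨T, hT, h₁, h₃, rfl⟩
    refine ⟨fun k ↦ extProjectiveVanishing.X₂ hT (h₁.extProjectiveVanishing k)
      (h₃.extProjectiveVanishing k), ?_⟩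
    obtain ⟨P, Z, j, q, hjq, hP, hj, hZ⟩ := h₁.exists_coresolution
    obtain ⟨θ, rfl⟩ :=
      extProjectiveVanishing.exists_extension hT (h₃.extProjectiveVanishing 0) j
    obtain ⟨r, hr, hlift⟩ := exists_shortExact_biprod_lift hT hj
    obtain ⟨P', Z', j', q', hjq', hP', hj', hZ'⟩ :=
      (h₃.biprod_of_projective P).exists_coresolution
    obtain ⟨a, b, hab, hcoker⟩ := exists_shortExact_of_comp hlift hj'
    have : Mono (biprod.lift θ T.g) := hlift.mono_f
    have : Mono j' := hj'.mono_f
    exact ⟨P', _, _, _, _, hP', shortExact_cokernel (biprod.lift θ T.g ≫ j'),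
      _, hcoker, hZ, hZ', rfl⟩

lemma X₃_of_extProjectiveVanishing (hS : S.ShortExact) (h₁ : gorensteinProjective S.X₁)
    (h₂ : gorensteinProjective S.X₂) (h₃ : extProjectiveVanishing 1 S.X₃) :
    gorensteinProjective S.X₃ := by
  obtain ⟨P, Z, j, q, hjq, hP, hj, hZ⟩ := h₁.exists_coresolution
  obtain ⟨θ, rfl⟩ := extProjectiveVanishing.exists_extension hS h₃ j
  obtain ⟨r, hr, hlift⟩ := exists_shortExact_biprod_lift hS hj
  have hE : gorensteinProjective (P ⊞ S.X₃) :=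
    ObjectProperty.prop_X₂_of_shortExact _ hlift h₂ hZ
  obtain ⟨P', Z', j', q', hjq', hP', hj', hZ'⟩ := hE.exists_coresolution
  obtain ⟨a, b, hab, hcoker⟩ := exists_shortExact_of_comp (shortExact_biprod_inr_fst P S.X₃) hj'
  have : Mono j' := hj'.mono_f
  refine of_coresolution (shortExact_cokernel (biprod.inr ≫ j')) (fun k ↦ ?_)
    (ObjectProperty.prop_X₂_of_shortExact _ hcoker (of_projective P) hZ')
  cases k with
  | zero => exact h₃
  | succ k =>
    exact extProjectiveVanishing.X₃ hS (h₁.extProjectiveVanishing k)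
      (h₂.extProjectiveVanishing (k + 1))

end gorensteinProjective

end GorensteinProjective

section GorensteinProjectiveDimension

variable {C : Type*} [Category* C] [Abelian C] [HasExt.{w} C]

/-- `gorensteinProjectiveDimLE n X` says that `X` has a resolution of length `n` by Gorenstein
projective objects. -/
def gorensteinProjectiveDimLE : ℕ → ObjectProperty C
  | 0 => gorensteinProjective
  | n + 1 => fun X ↦ ∃ (G : C) (p : G ⟶ X), Epi p ∧ gorensteinProjective G ∧
      gorensteinProjectiveDimLE n (kernel p)

namespace gorensteinProjectiveDimLE

instance (n : ℕ) : (gorensteinProjectiveDimLE (C := C) n).IsClosedUnderIsomorphisms where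
  of_iso {X Y} i hX := by
    induction n generalizing X Y with
    | zero => exact gorensteinProjective.prop_of_iso i hX
    | succ n ih =>
      obtain ⟨G, p, _, hG, hK⟩ := hX
      exact ⟨G, p ≫ i.hom, inferInstance, hG, ih (kernelCompMono p i.hom).symm hK⟩

variable {X : C} {n : ℕ}

protected lemma extProjectiveVanishing (hX : gorensteinProjectiveDimLE n X) {k : ℕ} (hk : n ≤ k) :
    extProjectiveVanishing (k + 1) X := by
  induction n generalizing X k with
  | zero => exact gorensteinProjective.extProjectiveVanishing hX k
  | succ n ih =>
    obtain ⟨G, p, _, hG, hK⟩ := hX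
    obtain ⟨k, rfl⟩ := Nat.exists_eq_add_of_le' (by omega : 1 ≤ k)
    exact extProjectiveVanishing.X₃ (shortExact_kernel p) (ih hK (by omega))
      (hG.extProjectiveVanishing (k + 1))

lemma succ (hX : gorensteinProjectiveDimLE n X) : gorensteinProjectiveDimLE (n + 1) X := by
  induction n generalizing X with
  | zero =>
    refine ⟨X, 𝟙 X, inferInstance, hX, ?_⟩
    have : Projective (kernel (𝟙 X)) := (isZero_kernel_of_mono (𝟙 X)).projective
    exact gorensteinProjective.of_projective _
  | succ n ih =>
    obtain ⟨G, p, hp, hG, hK⟩ := hX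
    exact ⟨G, p, hp, hG, ih hK⟩

lemma mono {m : ℕ} (hX : gorensteinProjectiveDimLE n X) (h : n ≤ m) :
    gorensteinProjectiveDimLE m X :=
  Nat.le_induction hX (fun _ _ ↦ succ) m h

lemma of_succ (hX : gorensteinProjectiveDimLE (n + 1) X)
    (hvan : extProjectiveVanishing (n + 1) X) : gorensteinProjectiveDimLE n X := by
  induction n generalizing X with
  | zero =>
    obtain ⟨G, p, _, hG, hK⟩ := hX
    exact gorensteinProjective.X₃_of_extProjectiveVanishing (shortExact_kernel p) hK hG hvan
  | succ n ih =>
    obtain ⟨G, p, hp, hG, hK⟩ := hX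
    exact ⟨G, p, hp, hG, ih hK
      (extProjectiveVanishing.X₁ (shortExact_kernel p) (hG.extProjectiveVanishing n) hvan)⟩

lemma iff_extProjectiveVanishing (hX : gorensteinProjectiveDimLE n X) (m : ℕ) :
    gorensteinProjectiveDimLE m X ↔ ∀ k, m ≤ k → extProjectiveVanishing (k + 1) X := by
  refine ⟨fun h _ ↦ h.extProjectiveVanishing, fun hvan ↦ ?_⟩
  induction n with
  | zero => exact hX.mono m.zero_le
  | succ n ih =>
    rcases le_or_gt m n with hmn | hmn
    · exact ih (hX.of_succ (hvan n hmn))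
    · exact hX.mono hmn

end gorensteinProjectiveDimLE

end GorensteinProjectiveDimension

section FrobeniusPair

variable {C D : Type*} [Category* C] [Category* D] {F : C ⥤ D} {G : D ⥤ C}

lemma exists_extension_map_iff (adj : G ⊣ F) (adj' : F ⊣ G) [F.Faithful] {X Y : C} (f : X ⟶ Y) :
    (∀ (Q : D) [Projective Q] (φ : F.obj X ⟶ Q), ∃ ψ : F.obj Y ⟶ Q, F.map f ≫ ψ = φ) ↔
      ∀ (Q : C) [Projective Q] (φ : X ⟶ Q), ∃ ψ : Y ⟶ Q, f ≫ ψ = φ := by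
  have := adj'.leftAdjoint_preservesColimits
  have := adj.leftAdjoint_preservesColimits
  refine ⟨fun h Q _ φ ↦ ?_, fun h Q _ φ ↦ ?_⟩
  · have : Projective (F.obj Q) := adj'.map_projective Q inferInstance
    let s := Projective.factorThru (𝟙 Q) (adj.counit.app Q)
    obtain ⟨ψ, hψ⟩ := h (F.obj Q) ((adj'.homEquiv _ _).symm (φ ≫ s))
    refine ⟨adj'.homEquiv _ _ ψ ≫ adj.counit.app Q, ?_⟩
    rw [← Category.assoc, ← adj'.homEquiv_naturality_left, hψ, Equiv.apply_symm_apply,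
      Category.assoc, Projective.factorThru_comp, Category.comp_id]
  · have : Projective (G.obj Q) := adj.map_projective Q inferInstance
    obtain ⟨ψ, hψ⟩ := h (G.obj Q) (adj'.homEquiv _ _ φ)
    refine ⟨(adj'.homEquiv _ _).symm ψ, ?_⟩
    rw [← adj'.homEquiv_naturality_left_symm, hψ, Equiv.symm_apply_apply]

variable [Abelian C] [Abelian D] [HasExt.{w} C] [HasExt.{w'} D] [EnoughProjectives C]

lemma extProjectiveVanishing_obj_iff (adj : G ⊣ F) (adj' : F ⊣ G) [F.Faithful] (X : C) (k : ℕ) :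
    extProjectiveVanishing (k + 1) (F.obj X) ↔ extProjectiveVanishing (k + 1) X := by
  have := adj.rightAdjoint_preservesLimits
  have := adj'.leftAdjoint_preservesColimits
  have : G.PreservesEpimorphisms := G.preservesEpimorphisms_of_adjunction adj
  induction k generalizing X with
  | zero =>
    obtain ⟨S, hS, _, rfl⟩ := exists_shortExact_projective X
    have : Projective (S.map F).X₂ := adj'.map_projective S.X₂ inferInstance
    exact (extProjectiveVanishing.one_iff_exists_extension (hS.map_of_exact F)).trans
      ((exists_extension_map_iff adj adj' S.f).trans
        (extProjectiveVanishing.one_iff_exists_extension hS).symm)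
  | succ k ih =>
    obtain ⟨S, hS, _, rfl⟩ := exists_shortExact_projective X
    have : Projective (S.map F).X₂ := adj'.map_projective S.X₂ inferInstance
    exact (extProjectiveVanishing.dimension_shift (hS.map_of_exact F)).trans
      ((ih _).trans (extProjectiveVanishing.dimension_shift hS).symm)

lemma gorensteinProjective.obj (adj : G ⊣ F) (adj' : F ⊣ G) [F.Faithful] {X : C}
    (hX : gorensteinProjective X) : gorensteinProjective (F.obj X) := by
  have := adj.rightAdjoint_preservesLimits
  have := adj'.leftAdjoint_preservesColimits
  have : G.PreservesEpimorphisms := G.preservesEpimorphisms_of_adjunction adj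
  refine ⟨gorensteinProjective.strictMap F, ?_, ObjectProperty.strictMap_obj _ _ hX⟩
  rintro _ ⟨X, hX⟩
  obtain ⟨P, Z, j, q, hjq, hP, hS, hZ⟩ := hX.exists_coresolution
  exact ⟨fun k ↦ (extProjectiveVanishing_obj_iff adj adj' X k).2 (hX.extProjectiveVanishing k),
    F.obj P, F.obj Z, F.map j, F.map q, _, adj'.map_projective P hP, hS.map_of_exact F,
    ObjectProperty.strictMap_obj _ _ hZ⟩

lemma gorensteinProjectiveDimLE.obj (adj : G ⊣ F) (adj' : F ⊣ G) [F.Faithful] {X : C} {n : ℕ}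
    (hX : gorensteinProjectiveDimLE n X) : gorensteinProjectiveDimLE n (F.obj X) := by
  have := adj.rightAdjoint_preservesLimits
  have := adj'.leftAdjoint_preservesColimits
  induction n generalizing X with
  | zero => exact gorensteinProjective.obj adj adj' hX
  | succ n ih =>
    obtain ⟨G, p, _, hG, hK⟩ := hX
    exact ⟨F.obj G, F.map p, inferInstance, hG.obj adj adj',
      ObjectProperty.prop_of_iso _ (PreservesKernel.iso F p) (ih hK)⟩

lemma gorensteinProjectiveDimLE_obj_iff (adj : G ⊣ F) (adj' : F ⊣ G) [F.Faithful] {X : C} {n : ℕ}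
    (hX : gorensteinProjectiveDimLE n X) (m : ℕ) :
    gorensteinProjectiveDimLE m (F.obj X) ↔ gorensteinProjectiveDimLE m X := by
  rw [(hX.obj adj adj').iff_extProjectiveVanishing, hX.iff_extProjectiveVanishing]
  simp only [extProjectiveVanishing_obj_iff adj adj']

end FrobeniusPair

section CompleteResolution

lemma exists_int_sequence {T : Type*} {r : T → T → Prop} (hsucc : ∀ x, ∃ y, r x y)
    (hpred : ∀ y, ∃ x, r x y) (t : T) (i₀ : ℤ) :
    ∃ Z : ℤ → T, Z i₀ = t ∧ ∀ i, r (Z (i + 1)) (Z i) := by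
  choose s hs using hsucc
  choose p hp using hpred
  refine ⟨fun i ↦ p^[(i - i₀).toNat] (s^[(i₀ - i).toNat] t), by simp, fun i ↦ ?_⟩
  rcases lt_or_ge i i₀ with hi | hi
  · have hpos : (i₀ - i).toNat = (i₀ - (i + 1)).toNat + 1 := by omega
    have hneg : (i - i₀).toNat = 0 := by omega
    have hneg' : (i + 1 - i₀).toNat = 0 := by omega
    simpa only [hpos, hneg, hneg', Function.iterate_succ_apply', Function.iterate_zero, id]
      using hs _
  · have hpos : (i + 1 - i₀).toNat = (i - i₀).toNat + 1 := by omega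
    have hneg : (i₀ - i).toNat = 0 := by omega
    have hneg' : (i₀ - (i + 1)).toNat = 0 := by omega
    simpa only [hpos, hneg, hneg', Function.iterate_succ_apply', Function.iterate_zero, id]
      using hp _

lemma gorensteinProjective.exists_int_resolution {C : Type*} [Category* C] [Abelian C]
    [HasExt.{w} C] [EnoughProjectives C] {X : C} (hX : gorensteinProjective X) (i₀ : ℤ) :
    ∃ (Z P : ℤ → C) (j : ∀ i, Z (i + 1) ⟶ P i) (q : ∀ i, P i ⟶ Z i)
      (hjq : ∀ i, j i ≫ q i = 0), Z i₀ = X ∧ (∀ i, gorensteinProjective (Z i)) ∧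
        ∀ i, Projective (P i) ∧ (ShortComplex.mk (j i) (q i) (hjq i)).ShortExact := by
  let r (Y Z : {Y : C // gorensteinProjective Y}) : Prop :=
    ∃ (P : C) (j : Y.1 ⟶ P) (q : P ⟶ Z.1) (hjq : j ≫ q = 0),
      Projective P ∧ (ShortComplex.mk j q hjq).ShortExact
  have hsucc (Y) : ∃ Z, r Y Z := by
    obtain ⟨P, Z, j, q, hjq, hP, hS, hZ⟩ := Y.2.exists_coresolution
    exact ⟨⟨Z, hZ⟩, P, j, q, hjq, hP, hS⟩
  have hpred (Z) : ∃ Y, r Y Z := by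
    obtain ⟨Z, hZ⟩ := Z
    obtain ⟨S, hS, hP, rfl⟩ := exists_shortExact_projective Z
    exact ⟨⟨S.X₁, X₁_of_projective hS hZ⟩, S.X₂, S.f, S.g, S.zero, hP, hS⟩
  obtain ⟨Z, hZ, hr⟩ := exists_int_sequence hsucc hpred ⟨X, hX⟩ i₀
  choose P j q hjq h using hr
  exact ⟨fun i ↦ Z i, P, j, q, hjq, congrArg Subtype.val hZ, fun i ↦ (Z i).2, h⟩

end CompleteResolution

section ModuleCat

variable {R : Type u} [Ring R]

section Complex

variable {P : ℤ → ModuleCat.{u} R} {f : ∀ i : ℤ, P (i + 1) →ₗ[R] P i}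

/-- The short complex `ker f_{i+1} ⟶ P_{i+2} ⟶ ker f_i` of cycles of a complex of modules. -/
abbrev cyclesShortComplex (hcomp : ∀ i, (f i).comp (f (i + 1)) = 0) (i : ℤ) :
    ShortComplex (ModuleCat.{u} R) :=
  .mk (ModuleCat.ofHom (LinearMap.ker (f (i + 1))).subtype)
    (ModuleCat.ofHom ((f (i + 1)).codRestrict (LinearMap.ker (f i))
      fun x ↦ LinearMap.congr_fun (hcomp i) x))
    (by ext x; exact x.2)

lemma shortExact_cyclesShortComplex (hcomp : ∀ i, (f i).comp (f (i + 1)) = 0)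
    (hex : ∀ i, LinearMap.range (f (i + 1)) = LinearMap.ker (f i)) (i : ℤ) :
    (cyclesShortComplex hcomp i).ShortExact := by
  refine ModuleCat.shortComplex_shortExact _ ?_ (Submodule.subtype_injective _) ?_
  · refine fun x ↦ ⟨fun hx ↦ ⟨⟨x, congrArg Subtype.val hx⟩, rfl⟩, ?_⟩
    rintro ⟨y, rfl⟩
    exact Subtype.ext y.2
  · rintro ⟨x, hx⟩
    rw [← hex i] at hx
    obtain ⟨y, rfl⟩ := hx
    exact ⟨y, rfl⟩

lemma extProjectiveVanishing_ker (hP : ∀ i, Module.Projective R (P i))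
    (hcomp : ∀ i, (f i).comp (f (i + 1)) = 0)
    (hex : ∀ i, LinearMap.range (f (i + 1)) = LinearMap.ker (f i))
    (hHom : ∀ Q : ModuleCat.{u} R, Module.Projective R Q → ∀ (i : ℤ) (g : P (i + 1) →ₗ[R] Q),
      g.comp (f (i + 1)) = 0 → ∃ h : P i →ₗ[R] Q, h.comp (f i) = g) (i : ℤ) (k : ℕ) :
    extProjectiveVanishing (k + 1) (ModuleCat.of R (LinearMap.ker (f i))) := by
  have hS : ∀ i, (cyclesShortComplex hcomp i).ShortExact := shortExact_cyclesShortComplex hcomp hex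
  have : ∀ i, Projective (cyclesShortComplex hcomp i).X₂ := fun i ↦
    (IsProjective.iff_projective _).1 (hP _)
  induction k generalizing i with
  | zero =>
    refine (extProjectiveVanishing.one_iff_exists_extension (hS i)).2 fun Q hQ φ ↦ ?_
    let p := (cyclesShortComplex hcomp (i + 1)).g
    have : Epi p := (hS (i + 1)).epi_g
    obtain ⟨ψ, hψ⟩ := hHom Q ((IsProjective.iff_projective _).2 hQ) _ (p ≫ φ).hom <| by
      ext x
      have hp : p (f (i + 1 + 1 + 1) x) = 0 :=
        Subtype.ext (LinearMap.congr_fun (hcomp (i + 1 + 1)) x)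
      exact (congrArg φ.hom hp).trans (map_zero _)
    refine ⟨ModuleCat.ofHom ψ, ?_⟩
    rw [← cancel_epi p]
    exact ModuleCat.hom_ext hψ
  | succ k ih => exact (extProjectiveVanishing.dimension_shift (hS i)).2 (ih (i + 1))

end Complex

lemma IsGorensteinProjective.gorensteinProjective {M : ModuleCat.{u} R}
    (hM : IsGorensteinProjective R M) : gorensteinProjective M := by
  obtain ⟨P, f, hP, hcomp, hex, hHom, ⟨e⟩⟩ := hM
  refine ObjectProperty.prop_of_iso _ e.toModuleIso.symm
    ⟨fun Y ↦ ∃ i, Y = ModuleCat.of R (LinearMap.ker (f i)), ?_, _, rfl⟩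
  rintro _ ⟨i, rfl⟩
  obtain ⟨i, rfl⟩ : ∃ m, i = m + 1 := ⟨i - 1, by omega⟩
  exact ⟨extProjectiveVanishing_ker hP hcomp hex hHom _, _, _, _, _, _,
    (IsProjective.iff_projective _).1 (hP _), shortExact_cyclesShortComplex hcomp hex i, i, rfl⟩

lemma isGorensteinProjective_of_shortExact {Z P : ℤ → ModuleCat.{u} R} {j : ∀ i, Z (i + 1) ⟶ P i}
    {q : ∀ i, P i ⟶ Z i} {hjq : ∀ i, j i ≫ q i = 0} (hZ : ∀ i, extProjectiveVanishing 1 (Z i))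
    (hP : ∀ i, Projective (P i)) (hS : ∀ i, (ShortComplex.mk (j i) (q i) (hjq i)).ShortExact) :
    IsGorensteinProjective R (Z (-1 + 1 + 1)) := by
  have hj (i) : Function.Injective (j i) := (ModuleCat.mono_iff_injective _).1 (hS i).mono_f
  have hq (i) : Function.Surjective (q i) := (ModuleCat.epi_iff_surjective _).1 (hS i).epi_g
  have hex (i) : LinearMap.range (j i).hom = LinearMap.ker (q i).hom :=
    (hS i).exact.moduleCat_range_eq_ker
  have hker (i) : LinearMap.ker (q (i + 1) ≫ j i).hom = LinearMap.ker (q (i + 1)).hom :=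
    LinearMap.ker_comp_of_ker_eq_bot _ (LinearMap.ker_eq_bot.2 (hj i))
  refine ⟨P, fun i ↦ (q (i + 1) ≫ j i).hom, fun i ↦ (IsProjective.iff_projective _).2 (hP i),
    fun i ↦ ?_, fun i ↦ ?_, fun Q hQ i g hg ↦ ?_,
    ⟨LinearEquiv.ofInjective _ (hj _) ≪≫ₗ LinearEquiv.ofEq _ _ ((hex _).trans (hker _).symm)⟩⟩
  · exact congrArg ModuleCat.Hom.hom (show (q (i + 1 + 1) ≫ j (i + 1)) ≫ q (i + 1) ≫ j i = 0 by
      simp [reassoc_of% hjq])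
  · rw [hker, ← hex]
    exact LinearMap.range_comp_of_range_eq_top _ (LinearMap.range_eq_top.2 (hq _))
  · have : Epi (q (i + 1 + 1)) := (hS _).epi_g
    have : Epi (q (i + 1)) := (hS _).epi_g
    have : Projective Q := (IsProjective.iff_projective _).1 hQ
    have hjg : j (i + 1) ≫ ModuleCat.ofHom g = 0 := by
      rw [← cancel_epi (q (i + 1 + 1)), comp_zero]
      exact ModuleCat.hom_ext hg
    obtain ⟨ψ, hψ⟩ :=
      extProjectiveVanishing.exists_extension (hS i) (hZ i) ((hS (i + 1)).exact.desc _ hjg)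
    have hfac : (q (i + 1) ≫ j i) ≫ ψ = ModuleCat.ofHom g := by
      rw [Category.assoc, hψ]
      exact (hS (i + 1)).exact.g_desc _ hjg
    exact ⟨ψ.hom, congrArg ModuleCat.Hom.hom hfac⟩

theorem isGorensteinProjective_iff {M : ModuleCat.{u} R} :
    IsGorensteinProjective R M ↔ gorensteinProjective M := by
  refine ⟨IsGorensteinProjective.gorensteinProjective, fun hM ↦ ?_⟩
  obtain ⟨Z, P, j, q, hjq, rfl, hZ, h⟩ := hM.exists_int_resolution (-1 + 1 + 1)
  exact isGorensteinProjective_of_shortExact (fun i ↦ (hZ i).extProjectiveVanishing 0)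
    (fun i ↦ (h i).1) (fun i ↦ (h i).2)

theorem GPdimLE_iff {n : ℕ} {M : ModuleCat.{u} R} :
    GPdimLE R n M ↔ gorensteinProjectiveDimLE n M := by
  induction n generalizing M with
  | zero => exact isGorensteinProjective_iff
  | succ n ih =>
    refine ⟨fun ⟨G, f, hf, hG, hK⟩ ↦ ?_, fun ⟨G, p, hp, hG, hK⟩ ↦ ?_⟩
    · exact ⟨G, ModuleCat.ofHom f, (ModuleCat.epi_iff_surjective _).2 hf,
        isGorensteinProjective_iff.1 hG,
        ObjectProperty.prop_of_iso _ (ModuleCat.kernelIsoKer _).symm (ih.1 hK)⟩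
    · exact ⟨G, p.hom, (ModuleCat.epi_iff_surjective _).1 hp, isGorensteinProjective_iff.2 hG,
        ih.2 (ObjectProperty.prop_of_iso _ (ModuleCat.kernelIsoKer _) hK)⟩

end ModuleCat

section FrobeniusSystem

variable {R A : Type u} [Ring R] [Ring A] {ι : R →+* A}

/-- A Frobenius system for a ring homomorphism `ι : R →+* A`, which need not be injective: an
`R`-`R`-bimodule homomorphism `τ : A → R` together with dual bases `x` and `y` of `A`. -/
structure FrobeniusSystem (ι : R →+* A) where
  τ : A →+ R
  n : ℕ
  x : Fin n → A
  y : Fin n → A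
  map_left_mul (r : R) (a : A) : τ (ι r * a) = r * τ a
  map_mul_right (a : A) (r : R) : τ (a * ι r) = τ a * r
  sum_left_mul (a : A) : ∑ i, x i * ι (τ (y i * a)) = a
  sum_mul_right (a : A) : ∑ i, ι (τ (a * x i)) * y i = a

namespace FrobeniusSystem

lemma nonempty_of_isFrobeniusExtension (hι : IsFrobeniusExtension ι) :
    Nonempty (FrobeniusSystem ι) :=
  let ⟨_, τ, n, x, y, h₁, h₂, h₃, h₄⟩ := hι
  ⟨⟨τ, n, x, y, h₁, h₂, h₃, h₄⟩⟩

variable (Φ : FrobeniusSystem ι)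

lemma sum_smul_apply {N : ModuleCat.{u} R} (f : (ModuleCat.coextendScalars ι).obj N) (a : A) :
    ∑ i, Φ.τ (a * Φ.x i) • f (Φ.y i) = f a := by
  let g : A →+ N := (ModuleCat.CoextendScalars.equiv ι N f).toAddMonoidHom
  have hg (r : R) (b : A) : g (ι r * b) = r • g b :=
    (ModuleCat.CoextendScalars.equiv ι N f).map_smul r b
  change ∑ i, Φ.τ (a * Φ.x i) • g (Φ.y i) = g a
  simp only [← hg, ← map_sum, Φ.sum_mul_right]

/-- The unit `q ↦ (a ↦ τ(a) q)` of the adjunction `coextendScalarsAdj`. -/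
noncomputable def unitApp (Q : ModuleCat.{u} R) :
    Q ⟶ (ModuleCat.restrictScalars ι).obj ((ModuleCat.coextendScalars ι).obj Q) :=
  ModuleCat.ofHom (Y := (ModuleCat.restrictScalars ι).obj ((ModuleCat.coextendScalars ι).obj Q))
    { toFun q := (ModuleCat.CoextendScalars.equiv ι Q).symm
        { toFun := fun a : A ↦ Φ.τ a • q
          map_add' := fun a b : A ↦ by
            rw [← add_smul, ← map_add]
            rfl
          map_smul' := fun r (a : A) ↦ by
            rw [RingHom.id_apply, ← mul_smul, ← Φ.map_left_mul]
            rfl }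
      map_add' q q' := ModuleCat.CoextendScalars.ext <| LinearMap.ext fun a : A ↦
        smul_add (Φ.τ a) q q'
      map_smul' r q := ModuleCat.CoextendScalars.ext <| LinearMap.ext fun a : A ↦ by
        change Φ.τ a • r • q = Φ.τ (a * ι r) • q
        rw [Φ.map_mul_right, mul_smul] }

/-- The counit `f ↦ ∑ᵢ xᵢ f(yᵢ)` of the adjunction `coextendScalarsAdj`. -/
noncomputable def counitApp (M : ModuleCat.{u} A) :
    (ModuleCat.coextendScalars ι).obj ((ModuleCat.restrictScalars ι).obj M) ⟶ M :=
  ModuleCat.ofHom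
    { toFun f := ∑ i, Φ.x i • (show M from f (Φ.y i))
      map_add' f g := by
        rw [← Finset.sum_add_distrib]
        exact Finset.sum_congr rfl fun i _ ↦ smul_add (Φ.x i) (show M from f (Φ.y i)) (g (Φ.y i))
      map_smul' a f := by
        let fM (b : A) : M := f b
        have hf (i) : fM (Φ.y i * a) = ∑ j, ι (Φ.τ (Φ.y i * a * Φ.x j)) • fM (Φ.y j) :=
          (Φ.sum_smul_apply f _).symm
        calc ∑ i, Φ.x i • fM (Φ.y i * a)
          _ = ∑ i, ∑ j, (Φ.x i * ι (Φ.τ (Φ.y i * (a * Φ.x j)))) • fM (Φ.y j) := by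
            simp only [hf, Finset.smul_sum, mul_smul, mul_assoc]
          _ = ∑ j, (a * Φ.x j) • fM (Φ.y j) := by
            rw [Finset.sum_comm]
            simp only [← Finset.sum_smul, Φ.sum_left_mul]
          _ = a • ∑ j, Φ.x j • fM (Φ.y j) := by
            simp only [Finset.smul_sum, mul_smul] }

/-- Over a ring homomorphism with a Frobenius system, coextension of scalars, which is always right
adjoint to restriction of scalars, is also left adjoint to it. -/
noncomputable def coextendScalarsAdj :
    ModuleCat.coextendScalars.{u, u, u} ι ⊣ ModuleCat.restrictScalars.{u} ι :=
  .mkOfUnitCounit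
    { unit :=
        { app := Φ.unitApp
          naturality Q Q' g := ModuleCat.hom_ext <| LinearMap.ext fun q : Q ↦
            ModuleCat.CoextendScalars.ext <| LinearMap.ext fun a : A ↦
              (g.hom.map_smul (Φ.τ a) q).symm }
      counit :=
        { app := Φ.counitApp
          naturality M M' g := ModuleCat.hom_ext <| LinearMap.ext fun
              f : (ModuleCat.coextendScalars ι).obj ((ModuleCat.restrictScalars ι).obj M) ↦ by
            let fM (b : A) : M := f b
            change ∑ i, Φ.x i • g (fM (Φ.y i)) = g (∑ i, Φ.x i • fM (Φ.y i))
            simp only [map_sum, map_smul] }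
      left_triangle := by
        ext Q (f : (ModuleCat.coextendScalars ι).obj Q)
        refine ModuleCat.CoextendScalars.ext <| LinearMap.ext fun a : A ↦ ?_
        let ev : (ModuleCat.coextendScalars ι).obj Q →+ Q := .mk' (fun g ↦ g a) fun _ _ ↦ rfl
        calc ev (∑ i, Φ.x i • Φ.unitApp Q (f (Φ.y i)))
          _ = ∑ i, Φ.τ (a * Φ.x i) • f (Φ.y i) := map_sum ev _ _
          _ = f a := Φ.sum_smul_apply f a
      right_triangle := by
        ext M m
        let m' : M := m
        change ∑ i, Φ.x i • ι (Φ.τ (Φ.y i)) • m' = m'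
        simpa only [mul_one, one_smul, Finset.sum_smul, mul_smul]
          using congrArg (· • m') (Φ.sum_left_mul 1) }

include Φ in
theorem GPdimLE_restrictScalars_iff {M : ModuleCat.{u} A} {n : ℕ} (hM : GPdimLE A n M) (m : ℕ) :
    GPdimLE R m ((ModuleCat.restrictScalars ι).obj M) ↔ GPdimLE A m M := by
  rw [GPdimLE_iff, GPdimLE_iff]
  exact gorensteinProjectiveDimLE_obj_iff Φ.coextendScalarsAdj
    (ModuleCat.restrictCoextendScalarsAdj ι) (GPdimLE_iff.1 hM) m

end FrobeniusSystem

end FrobeniusSystem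

lemma exists_GPdimLE_of_GPdim_ne_top {R : Type u} [Ring R] {M : ModuleCat.{u} R}
    (hM : GPdim R M ≠ ⊤) : ∃ n, GPdimLE R n M := by
  by_contra! h
  simp [GPdim, h] at hM

theorem stmt5_general {R A : Type u} [Ring R] [Ring A] {ι : R →+* A} (Φ : FrobeniusSystem ι)
    (M : ModuleCat.{u} A) (hM : GPdim A M ≠ ⊤) :
    GPdim A M = GPdim R ((ModuleCat.restrictScalars ι).obj M) := by
  obtain ⟨n, hn⟩ := exists_GPdimLE_of_GPdim_ne_top hM
  simp only [GPdim, Φ.GPdimLE_restrictScalars_iff hn]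

section Statement

variable {R A : Type u} [Ring R] [Ring A]

theorem stmt5 (ι : R →+* A) (hF : IsFrobeniusExtension ι)
    (M : Type u) [AddCommGroup M] [Module A M]
    (h : GPdim A (ModuleCat.of A M) ≠ ⊤) :
    GPdim A (ModuleCat.of A M) = GPdim R (@ModuleCat.of R _ M _ (Module.compHom M ι)) := by
  obtain ⟨Φ⟩ := FrobeniusSystem.nonempty_of_isFrobeniusExtension hF
  exact stmt5_general Φ (ModuleCat.of A M) h

end Statement
end

section
/- Let R ⊂ A be a Frobenius extension of rings and let M be a left A-module. If the Gorenstein injective dimension of M over A is finite, then G-id_A M = G-id_R M, where on the right M is viewed as a left R-module by restriction of scalars. -/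
universe u

/-- A left `R`-module `M` is Gorenstein injective if it is a cosyzygy of a totally acyclic
complex of injective modules: there is an acyclic complex `⋯ → I₁ → I₀ → I₋₁ → ⋯` of
injective `R`-modules which stays acyclic after applying `Hom_R(Q, -)` for every
injective `R`-module `Q`, with `M ≅ ker (I₀ → I₋₁)`. -/
def IsGorensteinInjective (R : Type u) [Ring R] (M : ModuleCat.{u} R) : Prop :=
  ∃ (I : ℤ → ModuleCat.{u} R) (f : ∀ i : ℤ, I (i + 1) →ₗ[R] I i),
    (∀ i, Module.Injective R (I i)) ∧
    (∀ i, (f i).comp (f (i + 1)) = 0) ∧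
    (∀ i, LinearMap.range (f (i + 1)) = LinearMap.ker (f i)) ∧
    (∀ Q : ModuleCat.{u} R, Module.Injective R Q →
      ∀ (i : ℤ) (g : Q →ₗ[R] I (i + 1)), (f i).comp g = 0 →
        ∃ h : Q →ₗ[R] I (i + 1 + 1), (f (i + 1)).comp h = g) ∧
    Nonempty (↥M ≃ₗ[R] ↥(LinearMap.ker (f (-1))))

/-- `GIdimLE R n M` means that `M` admits a Gorenstein injective coresolution of length `n`,
i.e. an exact sequence `0 → M → G⁰ → G¹ → ⋯ → Gⁿ → 0` with all `Gⁱ` Gorenstein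
injective. -/
def GIdimLE (R : Type u) [Ring R] : ℕ → ModuleCat.{u} R → Prop
  | 0, M => IsGorensteinInjective R M
  | n + 1, M => ∃ (G : ModuleCat.{u} R) (f : M →ₗ[R] G),
      Function.Injective f ∧ IsGorensteinInjective R G ∧
      GIdimLE R n (ModuleCat.of R (↥G ⧸ LinearMap.range f))

/-- The Gorenstein injective dimension of a left `R`-module, in `ℕ∞`. -/
noncomputable def GIdim (R : Type u) [Ring R] (M : ModuleCat.{u} R) : ℕ∞ :=
  sInf {k : ℕ∞ | ∃ n : ℕ, k = (n : ℕ∞) ∧ GIdimLE R n M}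

section Statement

variable {R A : Type u} [Ring R] [Ring A]

/-! Call an epimorphism proper if morphisms from injective modules lift along it. A module is
Gorenstein injective if and only if it has a left resolution by injective modules along proper
epimorphisms and `Extⁱ(Q, -)` vanishes on it for all injective `Q` and `i > 0`. The kernel of a
proper epimorphism between modules with a proper resolution again has one; hence, once the
Gorenstein injective dimension of `M` is finite, it is at most `m` exactly when `Extⁱ(Q, M) = 0` for
all injective `Q` and `i > m`.

For a Frobenius extension, restriction of scalars is both a left and a right adjoint of coextension.
A faithful functor with this property preserves injective modules, and it preserves and reflects
proper epimorphisms: lifting problems are transposed along the adjunction, and an injective `Q` is a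
direct summand of the injective module obtained by restricting and coextending it. By dimension
shifting it preserves and reflects the vanishing of these `Ext` groups, hence the dimension. -/

open CategoryTheory Limits ZeroObject Abelian

section ProperResolution

variable {C : Type*} [Category* C]

/-- Epimorphisms along which every morphism from an injective object lifts: the admissible
epimorphisms of the relative homological algebra in which injective objects play the role of
projectives. -/
structure IsProperEpi {X Y : C} (p : X ⟶ Y) : Prop where
  epi : Epi p
  exists_lift {Q : C} [Injective Q] (g : Q ⟶ Y) : ∃ t : Q ⟶ X, t ≫ p = g

theorem IsProperEpi.comp {X Y Z : C} {p : X ⟶ Y} {q : Y ⟶ Z} (hp : IsProperEpi p)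
    (hq : IsProperEpi q) : IsProperEpi (p ≫ q) where
  epi := have := hp.epi; have := hq.epi; inferInstance
  exists_lift g := by
    obtain ⟨s, rfl⟩ := hq.exists_lift g
    obtain ⟨t, rfl⟩ := hp.exists_lift s
    exact ⟨t, by simp⟩

theorem IsProperEpi.of_comp {X Y Z : C} {p : X ⟶ Y} {q : Y ⟶ Z} (h : IsProperEpi (p ≫ q)) :
    IsProperEpi q where
  epi := have := h.epi; epi_of_epi p q
  exists_lift g := by
    obtain ⟨t, rfl⟩ := h.exists_lift g
    exact ⟨t ≫ p, by simp⟩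

variable [Abelian C]

theorem IsProperEpi.of_isPullback {P X Y Z : C} {fst : P ⟶ X} {snd : P ⟶ Y} {p : X ⟶ Z}
    {f : Y ⟶ Z} (h : IsPullback fst snd p f) (hp : IsProperEpi p) : IsProperEpi snd where
  epi := have := hp.epi; Abelian.epi_snd_of_isLimit p f h.isLimit
  exists_lift g := by
    obtain ⟨t, ht⟩ := hp.exists_lift (g ≫ f)
    exact ⟨h.lift t g ht, by simp⟩

theorem IsProperEpi.biprod_desc {S : ShortComplex C} (hS : S.ShortExact) {X Y : C} {q : X ⟶ S.X₁}
    {φ : Y ⟶ S.X₂} (hq : IsProperEpi q) (hφ : IsProperEpi (φ ≫ S.g)) :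
    IsProperEpi (biprod.desc (q ≫ S.f) φ) where
  epi := Preadditive.epi_of_cancel_zero _ fun h hh ↦ by
    have := hφ.epi
    have := hq.epi
    have := hS.epi_g
    have hq0 : q ≫ S.f ≫ h = 0 := by simpa using biprod.inl ≫= hh
    obtain ⟨k, rfl⟩ : ∃ k, S.g ≫ k = h :=
      ⟨hS.exact.desc h (zero_of_epi_comp q hq0), by simp⟩
    have hφ0 : (φ ≫ S.g) ≫ k = 0 := by simpa using biprod.inr ≫= hh
    rw [zero_of_epi_comp _ hφ0, comp_zero]
  exists_lift g := by
    have := hS.mono_f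
    obtain ⟨u, hu⟩ := hφ.exists_lift (g ≫ S.g)
    obtain ⟨v, hv⟩ := hq.exists_lift (hS.exact.lift (g - u ≫ φ) (by simp [hu]))
    exact ⟨biprod.lift v u, by simp [reassoc_of% hv]⟩

theorem injective_of_isProperEpi {S : ShortComplex C} (hS : S.ShortExact) (hg : IsProperEpi S.g)
    [Injective S.X₂] [Injective S.X₃] : Injective S.X₁ := by
  obtain ⟨s, hs⟩ := hg.exists_lift (𝟙 S.X₃)
  let split := ShortComplex.Splitting.ofExactOfSection S hS.exact s hs hS.mono_f
  exact (Retract.mk S.f split.r split.f_r).injective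

theorem isPullback_zero {S : ShortComplex C} (hS : S.ShortExact) :
    IsPullback S.f 0 S.g (0 : 0 ⟶ S.X₃) := by
  have := hS.mono_f
  refine ⟨⟨by simp⟩, ⟨PullbackCone.IsLimit.mk _ (fun s ↦ hS.exact.lift s.fst ?_) ?_ ?_ ?_⟩⟩
  · simp [s.condition]
  · simp
  · intros; exact (isZero_zero C).eq_of_tgt _ _
  · intro s m hm _
    simp [← cancel_mono S.f, hm]

theorem shortExact_of_isPullback_zero {K J N : C} {i : K ⟶ J} {p : J ⟶ N} [Epi p]
    (h : IsPullback i 0 p (0 : 0 ⟶ N)) :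
    (ShortComplex.mk i p (by simpa using h.w)).ShortExact where
  exact := ShortComplex.exact_of_f_is_kernel _ <|
    KernelFork.IsLimit.ofι _ _ (fun k hk ↦ h.lift k 0 (by simp [hk])) (by simp)
      fun k _ m hm ↦ h.hom_ext (by simpa using hm) (by simp)
  mono_f := ⟨fun s t hst ↦ h.hom_ext hst (by simp)⟩

theorem shortExact_biprod_of_isPullback {T X Y Z : C} {t : T ⟶ X} {l : T ⟶ Y} {r : X ⟶ Z}
    {b : Y ⟶ Z} (h : IsPullback t l r b) [Epi (biprod.desc r b)] :
    (ShortComplex.mk (biprod.lift t (-l)) (biprod.desc r b) (by simp [h.w])).ShortExact where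
  exact := ShortComplex.exact_of_f_is_kernel _ <|
    KernelFork.IsLimit.ofι _ _
      (fun k hk ↦ h.lift (k ≫ biprod.fst) (-(k ≫ biprod.snd)) <| by
        simpa [biprod.desc_eq, ← eq_neg_iff_add_eq_zero] using hk)
      (fun k hk ↦ by ext <;> simp)
      fun k _ m hm ↦ by
        subst hm
        exact h.hom_ext (by simp) (by simp)
  mono_f := ⟨fun s s' hs ↦ h.hom_ext (by simpa using hs =≫ biprod.fst)
    (by simpa using hs =≫ biprod.snd)⟩

theorem isPullback_biprod_map_id {J X Y : C} (p : X ⟶ Y) :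
    IsPullback biprod.snd (biprod.map (𝟙 J) p) p biprod.snd :=
  ⟨⟨by simp⟩, ⟨PullbackCone.IsLimit.mk _ (fun s ↦ biprod.lift (s.snd ≫ biprod.fst) s.fst)
    (by simp) (fun s ↦ by ext <;> simp [s.condition]) fun s m hm hm' ↦ by
      ext
      · simp [← hm']
      · simp [hm]⟩⟩

/-- One step of a proper left injective resolution of `N`: a short exact sequence
`0 ⟶ syz ⟶ obj ⟶ N ⟶ 0` with `obj` injective and `obj ⟶ N` a proper epimorphism. -/
structure ProperCover (N : C) where
  syz : C
  obj : C
  ι : syz ⟶ obj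
  π : obj ⟶ N
  zero : ι ≫ π = 0
  shortExact : (ShortComplex.mk ι π zero).ShortExact
  injective : Injective obj
  proper : IsProperEpi π

attribute [instance] ProperCover.injective

/-- The proper cover given by a proper epimorphism from an injective object and its kernel. -/
def ProperCover.ofIsPullback {K J N : C} [Injective J] {i : K ⟶ J} {p : J ⟶ N}
    (hp : IsProperEpi p) (h : IsPullback i 0 p (0 : 0 ⟶ N)) : ProperCover N where
  syz := K
  obj := J
  ι := i
  π := p
  zero := by simpa using h.w
  shortExact := have := hp.epi; shortExact_of_isPullback_zero h
  injective := inferInstance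
  proper := hp

/-- Existence of an exact sequence `⋯ ⟶ J₁ ⟶ J₀ ⟶ N ⟶ 0` with injective `Jᵢ` which stays exact
under `Hom(Q, -)` for injective `Q`. It is encoded coinductively: `N` lies in a class of objects
each of which has a proper cover with syzygy in the class. -/
def HasProperResolution (N : C) : Prop :=
  ∃ P : C → Prop, P N ∧ ∀ N, P N → ∃ c : ProperCover N, P c.syz

theorem HasProperResolution.exists_cover {N : C} (h : HasProperResolution N) :
    ∃ c : ProperCover N, HasProperResolution c.syz := by
  obtain ⟨P, hN, hP⟩ := h
  obtain ⟨c, hc⟩ := hP N hN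
  exact ⟨c, P, hc, hP⟩

theorem ProperCover.hasProperResolution {N : C} (c : ProperCover N)
    (h : HasProperResolution c.syz) : HasProperResolution N :=
  ⟨fun N ↦ ∃ c : ProperCover N, HasProperResolution c.syz, ⟨c, h⟩,
    fun _ ⟨c, hc⟩ ↦ ⟨c, hc.exists_cover⟩⟩

theorem HasProperResolution.biprod {J N : C} [Injective J] (h : HasProperResolution N) :
    HasProperResolution (J ⊞ N) := by
  obtain ⟨c, hc⟩ := h.exists_cover
  have hπ := isPullback_biprod_map_id (J := J) c.π
  have hι : IsPullback (c.ι ≫ biprod.inr) 0 (biprod.map (𝟙 J) c.π) 0 :=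
    .of_right (by simpa using isPullback_zero c.shortExact) (by simp [reassoc_of% c.zero]) hπ
  exact (ProperCover.ofIsPullback (.of_isPullback hπ c.proper) hι).hasProperResolution hc

theorem exists_isPullback_of_properCovers {S : ShortComplex C} (hS : S.ShortExact)
    (c₂ : ProperCover S.X₂) (c₃ : ProperCover S.X₃) :
    ∃ (P : C) (j : P ⟶ c₂.obj) (a : P ⟶ S.X₁) (φ : c₂.obj ⟶ c₃.obj) (ψ : P ⟶ c₃.syz),
      φ ≫ c₃.π = c₂.π ≫ S.g ∧ IsPullback j a c₂.π S.f ∧ IsPullback j ψ φ c₃.ι := by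
  obtain ⟨φ, hφ⟩ := c₃.proper.exists_lift (c₂.π ≫ S.g)
  have ha : IsPullback (pullback.fst c₂.π S.f) (pullback.snd _ _) c₂.π S.f := .of_hasPullback _ _
  have hι : IsPullback c₃.ι 0 c₃.π (0 : 0 ⟶ S.X₃) := isPullback_zero c₃.shortExact
  have hj : IsPullback (pullback.fst c₂.π S.f) 0 (φ ≫ c₃.π) (0 : 0 ⟶ S.X₃) := by
    simpa [hφ] using ha.paste_vert (isPullback_zero hS)
  have hψ : hι.lift (pullback.fst c₂.π S.f ≫ φ) 0 (by simpa using hj.w) ≫ c₃.ι = _ :=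
    hι.lift_fst _ _ _
  exact ⟨_, _, _, φ, _, hφ, ha, .of_bot (by simpa using hj) hψ.symm hι⟩

theorem exists_properCover_of_shortExact {S : ShortComplex C} (hS : S.ShortExact)
    (hg : IsProperEpi S.g) (c₂ : ProperCover S.X₂) (c₃ : ProperCover S.X₃)
    (c₃' : ProperCover c₃.syz) :
    ∃ (c : ProperCover S.X₁) (t : c.syz ⟶ c₃'.obj) (l : c.syz ⟶ c₂.syz) (k : c₂.syz ⟶ c₃.syz),
      IsPullback t l c₃'.π k := by
  obtain ⟨P, j, a, φ, ψ, hφ, ha, hψ⟩ := exists_isPullback_of_properCovers hS c₂ c₃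
  have hι : IsPullback c₂.ι 0 c₂.π (0 : 0 ⟶ S.X₂) := isPullback_zero c₂.shortExact
  obtain ⟨k, hkj, hka⟩ : ∃ k, k ≫ j = c₂.ι ∧ k ≫ a = 0 :=
    ⟨ha.lift c₂.ι 0 (by simp [c₂.zero]), by simp⟩
  have hk : IsPullback k 0 a (0 : 0 ⟶ S.X₁) := .of_right (by simpa [hkj] using hι) (by simpa) ha
  have hb : IsPullback (pullback.fst c₃'.π ψ) (pullback.snd _ _) c₃'.π ψ := .of_hasPullback _ _
  have hl : IsPullback (pullback.fst (pullback.snd c₃'.π ψ) k) (pullback.snd _ _) _ k :=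
    .of_hasPullback _ _
  have hπ : IsProperEpi (pullback.snd c₃'.π ψ ≫ a) :=
    (IsProperEpi.of_isPullback hb c₃'.proper).comp (.of_isPullback ha c₂.proper)
  have hφ' : IsProperEpi (biprod.desc (c₃'.π ≫ c₃.ι) φ) :=
    .biprod_desc c₃.shortExact c₃'.proper (by simpa [hφ] using c₂.proper.comp hg)
  have := hφ'.epi
  have : Injective (pullback c₃'.π ψ) := injective_of_isProperEpi
    (shortExact_biprod_of_isPullback (hb.paste_vert hψ.flip)) hφ'
  exact ⟨.ofIsPullback hπ (by simpa using hl.paste_vert hk),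
    _, _, _, hl.paste_horiz hb⟩

theorem HasProperResolution.of_shortExact {S : ShortComplex C} (hS : S.ShortExact)
    (hg : IsProperEpi S.g) (h₂ : HasProperResolution S.X₂) (h₃ : HasProperResolution S.X₃) :
    HasProperResolution S.X₁ := by
  refine ⟨fun M ↦ ∃ S : ShortComplex C, S.X₁ = M ∧ S.ShortExact ∧ IsProperEpi S.g ∧
    HasProperResolution S.X₂ ∧ HasProperResolution S.X₃, ⟨S, rfl, hS, hg, h₂, h₃⟩, ?_⟩
  rintro _ ⟨S, rfl, hS, hg, h₂, h₃⟩
  obtain ⟨c₂, hc₂⟩ := h₂.exists_cover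
  obtain ⟨c₃, hc₃⟩ := h₃.exists_cover
  obtain ⟨c₃', -⟩ := hc₃.exists_cover
  obtain ⟨c, t, l, k, hc⟩ := exists_properCover_of_shortExact hS hg c₂ c₃ c₃'
  have hk : IsProperEpi (biprod.desc c₃'.π k) :=
    .of_comp (p := biprod.inl) (by simpa using c₃'.proper)
  have := hk.epi
  exact ⟨c, _, rfl, shortExact_biprod_of_isPullback hc, hk, hc₂.biprod, hc₃⟩

end ProperResolution

section ExtVanishing

universe w

variable {C : Type*} [Category* C] [Abelian C] [HasExt.{w} C]

/-- The vanishing of `Extⁿ(Q, M)` for all injective objects `Q`. -/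
def InjectiveExtVanishes (n : ℕ) (M : C) : Prop :=
  ∀ ⦃Q : C⦄ [Injective Q] (e : Ext Q M n), e = 0

theorem injectiveExtVanishes_of_injective (n : ℕ) (I : C) [Injective I] :
    InjectiveExtVanishes (n + 1) I :=
  fun _ _ e ↦ Ext.eq_zero_of_injective e

variable {S : ShortComplex C} {n : ℕ}

theorem InjectiveExtVanishes.X₁_of_X₃ (hS : S.ShortExact) (h₃ : InjectiveExtVanishes n S.X₃)
    (h₂ : InjectiveExtVanishes (n + 1) S.X₂) : InjectiveExtVanishes (n + 1) S.X₁ := by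
  intro Q _ e
  obtain ⟨e', rfl⟩ := Ext.covariant_sequence_exact₁ Q hS e (h₂ _) rfl
  rw [h₃ e', Ext.zero_comp]

theorem InjectiveExtVanishes.X₃_of_X₁ (hS : S.ShortExact) (h₁ : InjectiveExtVanishes (n + 1) S.X₁)
    (h₂ : InjectiveExtVanishes n S.X₂) : InjectiveExtVanishes n S.X₃ := by
  intro Q _ e
  obtain ⟨e', rfl⟩ := Ext.covariant_sequence_exact₃ Q hS e rfl (h₁ _)
  rw [h₂ e', Ext.zero_comp]

theorem InjectiveExtVanishes.isProperEpi (hS : S.ShortExact) (h₁ : InjectiveExtVanishes 1 S.X₁) :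
    IsProperEpi S.g where
  epi := hS.epi_g
  exists_lift {Q} _ g := by
    obtain ⟨e, he⟩ := Ext.covariant_sequence_exact₃ Q hS (Ext.mk₀ g) (zero_add 1) (h₁ _)
    obtain ⟨t, rfl⟩ := Ext.addEquiv₀.symm.surjective e
    exact ⟨t, Ext.addEquiv₀.symm.injective (by simpa using he)⟩

theorem IsProperEpi.injectiveExtVanishes (hS : S.ShortExact) (hg : IsProperEpi S.g)
    (h₂ : InjectiveExtVanishes 1 S.X₂) : InjectiveExtVanishes 1 S.X₁ := by
  intro Q _ e
  obtain ⟨e', rfl⟩ := Ext.covariant_sequence_exact₁ Q hS e (h₂ _) rfl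
  obtain ⟨g, rfl⟩ := Ext.addEquiv₀.symm.surjective e'
  obtain ⟨t, rfl⟩ := hg.exists_lift g
  rw [Ext.addEquiv₀_symm_apply, ← Ext.mk₀_comp_mk₀, Ext.comp_assoc_of_second_deg_zero,
    hS.comp_extClass, Ext.comp_zero]

theorem injectiveExtVanishes_one_iff (hS : S.ShortExact) (h₂ : InjectiveExtVanishes 1 S.X₂) :
    InjectiveExtVanishes 1 S.X₁ ↔ IsProperEpi S.g :=
  ⟨fun h₁ ↦ h₁.isProperEpi hS, fun hg ↦ hg.injectiveExtVanishes hS h₂⟩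

theorem injectiveExtVanishes_succ_iff (hS : S.ShortExact) (h₂ : InjectiveExtVanishes n S.X₂)
    (h₂' : InjectiveExtVanishes (n + 1) S.X₂) :
    InjectiveExtVanishes (n + 1) S.X₁ ↔ InjectiveExtVanishes n S.X₃ :=
  ⟨fun h₁ ↦ h₁.X₃_of_X₁ hS h₂, fun h₃ ↦ h₃.X₁_of_X₃ hS h₂'⟩

end ExtVanishing

section FrobeniusFunctor

universe w w'

variable {C D : Type*} [Category* C] [Category* D] {F : C ⥤ D} {H : D ⥤ C}

theorem injective_obj_of_adjunctions (adj : F ⊣ H) (adj' : H ⊣ F) (I : C) [Injective I] :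
    Injective (F.obj I) :=
  have := adj.rightAdjoint_preservesLimits
  adj'.map_injective I inferInstance

theorem IsProperEpi.map (adj : F ⊣ H) (adj' : H ⊣ F) {X Y : C} {p : X ⟶ Y} (hp : IsProperEpi p) :
    IsProperEpi (F.map p) where
  epi :=
    have := hp.epi
    have := adj.leftAdjoint_preservesColimits
    inferInstance
  exists_lift {Q} _ g := by
    have := injective_obj_of_adjunctions adj' adj Q
    obtain ⟨t, ht⟩ := hp.exists_lift ((adj'.homEquiv Q Y).symm g)
    exact ⟨adj'.homEquiv Q X t, by
      rw [← adj'.homEquiv_naturality_right, ht, Equiv.apply_symm_apply]⟩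

theorem IsProperEpi.of_map [F.Faithful] (adj : F ⊣ H) (adj' : H ⊣ F) {X Y : C} {p : X ⟶ Y}
    (hp : IsProperEpi (F.map p)) : IsProperEpi p where
  epi := have := hp.epi; F.epi_of_epi_map inferInstance
  exists_lift {Q} _ g := by
    have := injective_obj_of_adjunctions adj adj' Q
    let ρ : H.obj (F.obj Q) ⟶ Q := Injective.factorThru (𝟙 Q) (adj.unit.app Q)
    obtain ⟨t, ht⟩ := hp.exists_lift (adj'.homEquiv (F.obj Q) Y (ρ ≫ g))
    have ht' : (adj'.homEquiv (F.obj Q) X).symm t ≫ p = ρ ≫ g := by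
      rw [← adj'.homEquiv_naturality_right_symm, ht, Equiv.symm_apply_apply]
    have hρ : adj.unit.app Q ≫ ρ = 𝟙 Q := Injective.comp_factorThru _ _
    exact ⟨adj.unit.app Q ≫ (adj'.homEquiv (F.obj Q) X).symm t, by
      rw [Category.assoc, ht', reassoc_of% hρ]⟩

theorem isProperEpi_map_iff [F.Faithful] (adj : F ⊣ H) (adj' : H ⊣ F) {X Y : C} {p : X ⟶ Y} :
    IsProperEpi (F.map p) ↔ IsProperEpi p :=
  ⟨.of_map adj adj', .map adj adj'⟩

variable [Abelian C] [Abelian D]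

theorem shortExact_map_of_adjunctions [F.PreservesZeroMorphisms] (adj : F ⊣ H) (adj' : H ⊣ F)
    {S : ShortComplex C} (hS : S.ShortExact) : (S.map F).ShortExact :=
  have := adj.leftAdjoint_preservesColimits
  have := adj'.rightAdjoint_preservesLimits
  hS.map_of_exact F

theorem HasProperResolution.map [F.PreservesZeroMorphisms] (adj : F ⊣ H) (adj' : H ⊣ F) {N : C}
    (h : HasProperResolution N) : HasProperResolution (F.obj N) := by
  refine ⟨fun N' ↦ ∃ N : C, HasProperResolution N ∧ F.obj N = N', ⟨N, h, rfl⟩, ?_⟩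
  rintro _ ⟨N, h, rfl⟩
  obtain ⟨c, hc⟩ := h.exists_cover
  exact ⟨{
    syz := F.obj c.syz
    obj := F.obj c.obj
    ι := F.map c.ι
    π := F.map c.π
    zero := by rw [← F.map_comp, c.zero, F.map_zero]
    shortExact := shortExact_map_of_adjunctions adj adj' c.shortExact
    injective := injective_obj_of_adjunctions adj adj' c.obj
    proper := c.proper.map adj adj' }, c.syz, hc, rfl⟩

theorem exists_shortExact_injective [EnoughInjectives C] (M : C) :
    ∃ S : ShortComplex C, S.X₁ = M ∧ S.ShortExact ∧ Injective S.X₂ :=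
  ⟨.mk (Injective.ι M) (cokernel.π _) (cokernel.condition _), rfl,
    { exact := ShortComplex.exact_cokernel _ }, Injective.injective_under M⟩

theorem injectiveExtVanishes_map_iff [F.Faithful] [F.PreservesZeroMorphisms] [EnoughInjectives C]
    [HasExt.{w} C] [HasExt.{w'} D] (adj : F ⊣ H) (adj' : H ⊣ F) (n : ℕ) (M : C) :
    InjectiveExtVanishes (n + 1) (F.obj M) ↔ InjectiveExtVanishes (n + 1) M := by
  induction n generalizing M with
  | zero =>
    obtain ⟨S, rfl, hS, _⟩ := exists_shortExact_injective M
    have : Injective (S.map F).X₂ := injective_obj_of_adjunctions adj adj' S.X₂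
    calc InjectiveExtVanishes 1 (S.map F).X₁
      _ ↔ IsProperEpi (F.map S.g) :=
        injectiveExtVanishes_one_iff (shortExact_map_of_adjunctions adj adj' hS)
          (injectiveExtVanishes_of_injective _ _)
      _ ↔ IsProperEpi S.g := isProperEpi_map_iff adj adj'
      _ ↔ InjectiveExtVanishes 1 S.X₁ :=
        (injectiveExtVanishes_one_iff hS (injectiveExtVanishes_of_injective _ _)).symm
  | succ n ih =>
    obtain ⟨S, rfl, hS, _⟩ := exists_shortExact_injective M
    have : Injective (S.map F).X₂ := injective_obj_of_adjunctions adj adj' S.X₂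
    calc InjectiveExtVanishes (n + 2) (S.map F).X₁
      _ ↔ InjectiveExtVanishes (n + 1) (F.obj S.X₃) :=
        injectiveExtVanishes_succ_iff (shortExact_map_of_adjunctions adj adj' hS)
          (injectiveExtVanishes_of_injective _ _) (injectiveExtVanishes_of_injective _ _)
      _ ↔ InjectiveExtVanishes (n + 1) S.X₃ := ih S.X₃
      _ ↔ InjectiveExtVanishes (n + 2) S.X₁ :=
        (injectiveExtVanishes_succ_iff hS (injectiveExtVanishes_of_injective _ _)
          (injectiveExtVanishes_of_injective _ _)).symm

end FrobeniusFunctor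

section TotalResolution

theorem exists_int_chain {α : Type*} {r : α → α → Prop} (hl : ∀ b, ∃ a, r a b)
    (hr : ∀ a, ∃ b, r a b) (j : ℤ) (x : α) :
    ∃ z : ℤ → α, z j = x ∧ ∀ i, r (z (i + 1)) (z i) := by
  choose l hl using hl
  choose s hs using hr
  let z (i : ℤ) : α := Int.inductionOn' i j x (fun _ _ a ↦ l a) fun _ _ a ↦ s a
  refine ⟨z, Int.inductionOn'_self, fun i ↦ ?_⟩
  obtain hi | hi := le_or_gt j i
  · have hz : z (i + 1) = l (z i) := Int.inductionOn'_add_one hi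
    exact hz ▸ hl _
  · have hz : z (i + 1 - 1) = s (z (i + 1)) := Int.inductionOn'_sub_one hi
    rw [add_sub_cancel_right] at hz
    exact hz ▸ hs _

universe w

variable {C : Type*} [Category* C] [Abelian C]

/-- Transport of a proper cover along an isomorphism. -/
def ProperCover.ofIso {N N' : C} (c : ProperCover N) (e : N ≅ N') : ProperCover N' where
  syz := c.syz
  obj := c.obj
  ι := c.ι
  π := c.π ≫ e.hom
  zero := by simp [reassoc_of% c.zero]
  shortExact := ShortComplex.shortExact_of_iso
    (ShortComplex.isoMk (S₁ := .mk c.ι c.π c.zero) (Iso.refl _) (Iso.refl _) e) c.shortExact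
  injective := c.injective
  proper := c.proper.comp
    { epi := inferInstance, exists_lift := fun g ↦ ⟨g ≫ e.inv, by simp⟩ }

theorem HasProperResolution.of_iso {N N' : C} (e : N ≅ N') (h : HasProperResolution N) :
    HasProperResolution N' := by
  obtain ⟨c, hc⟩ := h.exists_cover
  exact (c.ofIso e).hasProperResolution hc

theorem InjectiveExtVanishes.of_iso [HasExt.{w} C] {n : ℕ} {M N : C} (e : M ≅ N)
    (h : InjectiveExtVanishes n M) : InjectiveExtVanishes n N := by
  intro Q _ x
  have hx : (x.comp (Ext.mk₀ e.inv) (add_zero n)).comp (Ext.mk₀ e.hom) (add_zero n) = 0 := by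
    rw [h (x.comp _ _), Ext.zero_comp]
  simpa using hx

variable {Z : ℤ → C} {c : ∀ i, ProperCover (Z i)}

theorem hasProperResolution_of_properCovers (e : ∀ i, (c i).syz ≅ Z (i + 1)) (j : ℤ) :
    HasProperResolution (Z j) := by
  refine ⟨fun N ↦ ∃ i, Nonempty (Z i ≅ N), ⟨j, ⟨.refl _⟩⟩, ?_⟩
  rintro N ⟨i, ⟨a⟩⟩
  exact ⟨(c i).ofIso a, i + 1, ⟨(e i).symm⟩⟩

variable [HasExt.{w} C]

theorem ProperCover.injectiveExtVanishes_one_syz {N : C} (c : ProperCover N) :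
    InjectiveExtVanishes 1 c.syz :=
  c.proper.injectiveExtVanishes c.shortExact (injectiveExtVanishes_of_injective _ _)

theorem ProperCover.injectiveExtVanishes_succ_syz {N : C} (c : ProperCover N) {n : ℕ}
    (h : InjectiveExtVanishes n N) : InjectiveExtVanishes (n + 1) c.syz :=
  h.X₁_of_X₃ c.shortExact (injectiveExtVanishes_of_injective _ _)

theorem injectiveExtVanishes_of_properCovers (e : ∀ i, (c i).syz ≅ Z (i + 1)) (n : ℕ) (j : ℤ) :
    InjectiveExtVanishes (n + 1) (Z j) := by
  obtain ⟨i, rfl⟩ : ∃ i, j = i + 1 := ⟨j - 1, by simp⟩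
  induction n generalizing i with
  | zero => exact (c i).injectiveExtVanishes_one_syz.of_iso (e i)
  | succ n ih =>
    obtain ⟨i, rfl⟩ : ∃ j, i = j + 1 := ⟨i - 1, by simp⟩
    exact ((c (i + 1)).injectiveExtVanishes_succ_syz (ih i)).of_iso (e (i + 1))

theorem exists_properCover_syz [EnoughInjectives C] {M : C} (hM : HasProperResolution M)
    (hE : ∀ n, InjectiveExtVanishes (n + 1) M) :
    ∃ (N : C) (c : ProperCover N), c.syz = M ∧ HasProperResolution N ∧
      ∀ n, InjectiveExtVanishes (n + 1) N := by
  obtain ⟨S, rfl, hS, _⟩ := exists_shortExact_injective M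
  let c : ProperCover S.X₃ := ⟨_, _, S.f, S.g, S.zero, hS, ‹_›, (hE 0).isProperEpi hS⟩
  exact ⟨S.X₃, c, rfl, c.hasProperResolution hM, fun n ↦
    (hE (n + 1)).X₃_of_X₁ hS (injectiveExtVanishes_of_injective _ _)⟩

theorem exists_properCovers [EnoughInjectives C] {M : C} (hM : HasProperResolution M)
    (hE : ∀ n, InjectiveExtVanishes (n + 1) M) (j : ℤ) :
    ∃ (Z : ℤ → C) (c : ∀ i, ProperCover (Z i)), Z j = M ∧ ∀ i, (c i).syz = Z (i + 1) := by
  let P (N : C) : Prop := HasProperResolution N ∧ ∀ n, InjectiveExtVanishes (n + 1) N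
  let r (K N : Subtype P) : Prop := ∃ c : ProperCover N.1, c.syz = K.1
  have hl (N : Subtype P) : ∃ K, r K N := by
    obtain ⟨c, hc⟩ := N.2.1.exists_cover
    exact ⟨⟨c.syz, hc, fun
      | 0 => c.injectiveExtVanishes_one_syz
      | n + 1 => c.injectiveExtVanishes_succ_syz (N.2.2 n)⟩, c, rfl⟩
  have hr (K : Subtype P) : ∃ N, r K N := by
    obtain ⟨N, c, hc, hN⟩ := exists_properCover_syz K.2.1 K.2.2
    exact ⟨⟨N, hN⟩, c, hc⟩
  obtain ⟨Z, hZ, h⟩ := exists_int_chain hl hr j ⟨M, hM, hE⟩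
  choose c hc using h
  exact ⟨fun i ↦ (Z i).1, c, congrArg Subtype.val hZ, hc⟩

end TotalResolution

section GorensteinInjective

theorem exists_properCover_ker {I : ℤ → ModuleCat.{u} R} {f : ∀ i, I (i + 1) →ₗ[R] I i}
    (hI : ∀ i, Module.Injective R (I i))
    (hex : ∀ i, LinearMap.range (f (i + 1)) = LinearMap.ker (f i))
    (hlift : ∀ Q : ModuleCat.{u} R, Module.Injective R Q → ∀ (i : ℤ) (g : Q →ₗ[R] I (i + 1)),
      (f i).comp g = 0 → ∃ h : Q →ₗ[R] I (i + 1 + 1), (f (i + 1)).comp h = g) (i : ℤ) :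
    ∃ c : ProperCover (ModuleCat.of R (LinearMap.ker (f i))),
      c.syz = ModuleCat.of R (LinearMap.ker (f (i + 1))) := by
  have hf (x) : f (i + 1) x ∈ LinearMap.ker (f i) := hex i ▸ LinearMap.mem_range_self _ x
  let p : I (i + 1 + 1) →ₗ[R] LinearMap.ker (f i) := (f (i + 1)).codRestrict _ hf
  have hexact : Function.Exact (LinearMap.ker (f (i + 1))).subtype p := by
    rw [LinearMap.exact_iff, LinearMap.ker_codRestrict, Submodule.range_subtype]
  have hp : Function.Surjective p := by
    rw [← LinearMap.range_eq_top, LinearMap.range_codRestrict, hex i, Submodule.comap_subtype_self]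
  exact ⟨{
    syz := .of R (LinearMap.ker (f (i + 1)))
    obj := I (i + 1 + 1)
    ι := ModuleCat.ofHom (LinearMap.ker (f (i + 1))).subtype
    π := ModuleCat.ofHom p
    zero := ModuleCat.hom_ext hexact.linearMap_comp_eq_zero
    shortExact := ModuleCat.shortComplex_shortExact _ hexact Subtype.val_injective hp
    injective := (Module.injective_iff_injective_object R _).1 (hI _)
    proper.epi := (ModuleCat.epi_iff_surjective _).2 hp
    proper.exists_lift {Q} _ g := by
      obtain ⟨h, hh⟩ := hlift Q ((Module.injective_iff_injective_object R _).2 ‹_›) i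
        ((LinearMap.ker (f i)).subtype.comp g.hom) (by ext x; exact (g.hom x).2)
      exact ⟨ModuleCat.ofHom h, ModuleCat.hom_ext <| LinearMap.ext fun x ↦
        Subtype.ext (LinearMap.congr_fun hh x)⟩ }, rfl⟩

theorem IsGorensteinInjective.exists_properCovers {M : ModuleCat.{u} R}
    (h : IsGorensteinInjective R M) :
    ∃ (Z : ℤ → ModuleCat.{u} R) (c : ∀ i, ProperCover (Z i)) (j : ℤ),
      Nonempty (Z j ≅ M) ∧ ∀ i, Nonempty ((c i).syz ≅ Z (i + 1)) := by
  obtain ⟨I, f, hI, -, hex, hlift, ⟨e⟩⟩ := h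
  choose c hc using exists_properCover_ker hI hex hlift
  exact ⟨_, c, -1, ⟨e.symm.toModuleIso⟩, fun i ↦ ⟨eqToIso (hc i)⟩⟩

theorem ker_eq_range_of_shortExact {S : ShortComplex (ModuleCat.{u} R)} (hS : S.ShortExact) :
    LinearMap.ker S.g.hom = LinearMap.range S.f.hom :=
  LinearMap.exact_iff.1 ((ShortComplex.ShortExact.moduleCat_exact_iff_function_exact S).1 hS.exact)

theorem isGorensteinInjective_of_shortExact {Z J : ℤ → ModuleCat.{u} R} [∀ i, Injective (J i)]
    {k : ∀ i, Z (i + 1) ⟶ J i} {p : ∀ i, J i ⟶ Z i} {w : ∀ i, k i ≫ p i = 0}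
    (hS : ∀ i, (ShortComplex.mk (k i) (p i) (w i)).ShortExact) (hp : ∀ i, IsProperEpi (p i)) :
    IsGorensteinInjective R (Z 1) := by
  let f (i : ℤ) : J (i + 1) ⟶ J i := p (i + 1) ≫ k i
  have hk (i : ℤ) : Function.Injective (k i).hom := (hS i).moduleCat_injective_f
  have hker (i : ℤ) : LinearMap.ker (f i).hom = LinearMap.range (k (i + 1)).hom := by
    rw [← ker_eq_range_of_shortExact (hS (i + 1)), ModuleCat.hom_comp,
      LinearMap.ker_comp_of_ker_eq_bot _ (LinearMap.ker_eq_bot.2 (hk i))]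
  have hrange (i : ℤ) : LinearMap.range (f i).hom = LinearMap.range (k i).hom := by
    rw [ModuleCat.hom_comp, LinearMap.range_comp_of_range_eq_top _
      (LinearMap.range_eq_top.2 (hS (i + 1)).moduleCat_surjective_g)]
  have hexact (i : ℤ) : LinearMap.range (f (i + 1)).hom = LinearMap.ker (f i).hom := by
    rw [hrange, hker]
  refine ⟨J, fun i ↦ (f i).hom, fun i ↦ (Module.injective_iff_injective_object R _).2 inferInstance,
    fun i ↦ LinearMap.range_le_ker_iff.1 (hexact i).le, hexact, fun Q hQ i g hg ↦ ?_,
    ⟨(LinearEquiv.ofInjective _ (hk (-1 + 1))).trans (.ofEq _ _ (hker (-1)).symm)⟩⟩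
  have := (Module.injective_iff_injective_object R Q).1 hQ
  have := (hS i).mono_f
  have := (hS (i + 1)).mono_f
  have hg' : ModuleCat.ofHom g ≫ p (i + 1) = 0 := by
    rw [← cancel_mono (k i), zero_comp, Category.assoc]
    exact ModuleCat.hom_ext hg
  obtain ⟨t, ht⟩ := (hp (i + 1 + 1)).exists_lift ((hS (i + 1)).exact.lift _ hg')
  have htf : t ≫ f (i + 1) = ModuleCat.ofHom g := by
    rw [reassoc_of% ht]
    exact (hS (i + 1)).exact.lift_f _ hg'
  exact ⟨t.hom, congrArg ModuleCat.Hom.hom htf⟩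

theorem isGorensteinInjective_of_properCovers {Z : ℤ → ModuleCat.{u} R}
    {c : ∀ i, ProperCover (Z i)} (e : ∀ i, (c i).syz ≅ Z (i + 1)) :
    IsGorensteinInjective R (Z 1) :=
  have w (i : ℤ) : ((e i).inv ≫ (c i).ι) ≫ (c i).π = 0 := by simp [(c i).zero]
  isGorensteinInjective_of_shortExact (w := w)
    (fun i ↦ ShortComplex.shortExact_of_iso
      (ShortComplex.isoMk (S₁ := .mk _ _ (c i).zero) (e i) (Iso.refl _) (Iso.refl _))
      (c i).shortExact)
    fun i ↦ (c i).proper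

theorem isGorensteinInjective_iff {M : ModuleCat.{u} R} :
    IsGorensteinInjective R M ↔
      HasProperResolution M ∧ ∀ n, InjectiveExtVanishes.{u} (n + 1) M := by
  constructor
  · intro h
    obtain ⟨Z, c, j, ⟨a⟩, e⟩ := h.exists_properCovers
    have e i := (e i).some
    exact ⟨.of_iso a (hasProperResolution_of_properCovers e j), fun n ↦
      .of_iso a (injectiveExtVanishes_of_properCovers e n j)⟩
  · rintro ⟨hM, hE⟩
    obtain ⟨Z, c, rfl, hc⟩ := exists_properCovers hM hE 1
    exact isGorensteinInjective_of_properCovers fun i ↦ eqToIso (hc i)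

theorem IsGorensteinInjective.of_iso {M N : ModuleCat.{u} R} (e : M ≅ N)
    (h : IsGorensteinInjective R M) : IsGorensteinInjective R N := by
  rw [isGorensteinInjective_iff] at h ⊢
  exact ⟨h.1.of_iso e, fun n ↦ (h.2 n).of_iso e⟩

end GorensteinInjective

section Dimension

theorem GIdimLE.of_iso {n : ℕ} {M N : ModuleCat.{u} R} (e : M ≅ N) (h : GIdimLE R n M) :
    GIdimLE R n N := by
  cases n with
  | zero => exact IsGorensteinInjective.of_iso e h
  | succ n =>
    obtain ⟨G, f, hf, hG, h⟩ := h
    let e' : N ≃ₗ[R] M := e.symm.toLinearEquiv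
    refine ⟨G, f.comp e'.toLinearMap, hf.comp e'.injective, hG, ?_⟩
    rwa [LinearEquiv.range_comp]

theorem gIdimLE_succ_iff {n : ℕ} {M : ModuleCat.{u} R} :
    GIdimLE R (n + 1) M ↔ ∃ S : ShortComplex (ModuleCat.{u} R),
      S.X₁ = M ∧ S.ShortExact ∧ IsGorensteinInjective R S.X₂ ∧ GIdimLE R n S.X₃ := by
  constructor
  · rintro ⟨G, f, hf, hG, h⟩
    have hexact : Function.Exact f (LinearMap.range f).mkQ := LinearMap.exact_map_mkQ_range f
    exact ⟨.mk (ModuleCat.ofHom f) (ModuleCat.ofHom (LinearMap.range f).mkQ)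
      (ModuleCat.hom_ext hexact.linearMap_comp_eq_zero), rfl,
      ModuleCat.shortComplex_shortExact _ hexact hf (Submodule.mkQ_surjective _), hG, h⟩
  · rintro ⟨S, rfl, hS, hG, h⟩
    let e : S.X₃ ≃ₗ[R] S.X₂ ⧸ LinearMap.range S.f.hom :=
      (S.g.hom.quotKerEquivOfSurjective hS.moduleCat_surjective_g).symm.trans
        (Submodule.quotEquivOfEq _ _ (ker_eq_range_of_shortExact hS))
    exact ⟨S.X₂, S.f.hom, hS.moduleCat_injective_f, hG, h.of_iso e.toModuleIso⟩

theorem GIdimLE.injectiveExtVanishes {n i : ℕ} {M : ModuleCat.{u} R} (h : GIdimLE R n M)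
    (hi : n ≤ i) : InjectiveExtVanishes.{u} (i + 1) M := by
  induction n generalizing M i with
  | zero => exact (isGorensteinInjective_iff.1 h).2 i
  | succ n ih =>
    obtain ⟨S, rfl, hS, h₂, h₃⟩ := gIdimLE_succ_iff.1 h
    obtain ⟨i, rfl⟩ := Nat.exists_eq_add_of_lt hi
    exact (ih h₃ (by lia)).X₁_of_X₃ hS ((isGorensteinInjective_iff.1 h₂).2 _)

theorem GIdimLE.of_succ {n : ℕ} {M : ModuleCat.{u} R} (h : GIdimLE R (n + 1) M)
    (hE : ∀ i, n ≤ i → InjectiveExtVanishes.{u} (i + 1) M) : GIdimLE R n M := by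
  induction n generalizing M with
  | zero =>
    obtain ⟨S, rfl, hS, h₂, h₃⟩ := gIdimLE_succ_iff.1 h
    exact isGorensteinInjective_iff.2 ⟨.of_shortExact hS ((hE 0 le_rfl).isProperEpi hS)
      (isGorensteinInjective_iff.1 h₂).1 (isGorensteinInjective_iff.1 h₃).1,
      fun i ↦ hE i i.zero_le⟩
  | succ n ih =>
    obtain ⟨S, rfl, hS, h₂, h₃⟩ := gIdimLE_succ_iff.1 h
    exact gIdimLE_succ_iff.2 ⟨S, rfl, hS, h₂, ih h₃ fun i hi ↦
      (hE (i + 1) (by lia)).X₃_of_X₁ hS ((isGorensteinInjective_iff.1 h₂).2 i)⟩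

theorem gIdim_le_natCast_iff {M : ModuleCat.{u} R} {m : ℕ} :
    GIdim R M ≤ m ↔ ∃ n ≤ m, GIdimLE R n M := by
  constructor
  · intro h
    have hne : {k : ℕ∞ | ∃ n : ℕ, k = n ∧ GIdimLE R n M}.Nonempty := by
      by_contra! hempty
      simp [GIdim, hempty] at h
    obtain ⟨n, hn, hM⟩ := csInf_mem hne
    exact ⟨n, by exact_mod_cast hn.symm.trans_le h, hM⟩
  · rintro ⟨n, hn, hM⟩
    calc GIdim R M ≤ n := sInf_le ⟨n, rfl, hM⟩
      _ ≤ m := by exact_mod_cast hn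

theorem gIdim_ne_top_iff {M : ModuleCat.{u} R} : GIdim R M ≠ ⊤ ↔ ∃ n, GIdimLE R n M := by
  constructor
  · intro h
    lift GIdim R M to ℕ using h with n hn
    obtain ⟨k, -, hk⟩ := gIdim_le_natCast_iff.1 hn.ge
    exact ⟨k, hk⟩
  · rintro ⟨n, hn⟩
    exact ne_top_of_le_ne_top (ENat.natCast_ne_top n) (gIdim_le_natCast_iff.2 ⟨n, le_rfl, hn⟩)

theorem gIdim_le_natCast_iff_injectiveExtVanishes {M : ModuleCat.{u} R} (h : GIdim R M ≠ ⊤)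
    {m : ℕ} : GIdim R M ≤ m ↔ ∀ i, m ≤ i → InjectiveExtVanishes.{u} (i + 1) M := by
  rw [gIdim_le_natCast_iff]
  constructor
  · rintro ⟨n, hn, hM⟩ i hi
    exact hM.injectiveExtVanishes (hn.trans hi)
  · intro hE
    obtain ⟨n, hn⟩ := gIdim_ne_top_iff.1 h
    obtain hnm | hmn := le_total n m
    · exact ⟨n, hnm, hn⟩
    · induction n, hmn using Nat.le_induction with
      | base => exact ⟨m, le_rfl, hn⟩
      | succ n hmn ih => exact ih (hn.of_succ fun i hi ↦ hE i (hmn.trans hi))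

end Dimension

section RestrictionOfScalars

open ModuleCat (restrictScalars coextendScalars)

variable {ι : R →+* A}

theorem coextendScalars_apply_sum_map_mul {X : ModuleCat.{u} R}
    (v : (coextendScalars.{u, u, u} ι).obj X) {n : ℕ} (r : Fin n → R) (a : Fin n → A) :
    v (∑ i, ι (r i) * a i) = ∑ i, r i • v (a i) := by
  let v' : A →+ X := (ModuleCat.CoextendScalars.equiv ι X v).toAddMonoidHom
  have hv' (r : R) (a : A) : v' (ι r * a) = r • v' a :=
    (ModuleCat.CoextendScalars.equiv ι X v).map_smul r a
  exact (map_sum v' _ _).trans (Finset.sum_congr rfl fun i _ ↦ hv' (r i) (a i))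

theorem coextendScalars_sum_apply {X : ModuleCat.{u} R} {n : ℕ}
    (v : Fin n → (coextendScalars.{u, u, u} ι).obj X) (a : A) : (∑ i, v i) a = ∑ i, v i a :=
  let ev : (coextendScalars ι).obj X →+ X :=
    { toFun := fun v ↦ v a, map_zero' := rfl, map_add' := fun _ _ ↦ rfl }
  map_sum ev _ _

/-- A Frobenius system of `ι : R →+* A`: an `R`-`R`-bimodule homomorphism `τ : A → R` with dual
bases `x` and `y`. -/
structure FrobeniusSystem_s6 (ι : R →+* A) where
  τ : A →+ R
  n : ℕ
  x : Fin n → A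
  y : Fin n → A
  map_mul_left : ∀ r a, τ (ι r * a) = r * τ a
  map_mul_right : ∀ a r, τ (a * ι r) = τ a * r
  sum_mul_map : ∀ a, ∑ i, x i * ι (τ (y i * a)) = a
  sum_map_mul : ∀ a, ∑ i, ι (τ (a * x i)) * y i = a

namespace FrobeniusSystem_s6

variable (s : FrobeniusSystem_s6 ι) {X : ModuleCat.{u} R} {N : ModuleCat.{u} A}

/-- The map `v ↦ (a ↦ τ a • v)` from an `R`-module to its coextension of scalars. -/
noncomputable def coextend (v : X) : (coextendScalars.{u, u, u} ι).obj X :=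
  (ModuleCat.CoextendScalars.equiv ι X).symm
    { toFun := fun a : A ↦ s.τ a • v
      map_add' := fun a b : A ↦ (congrArg (· • v) (s.τ.map_add a b)).trans (add_smul _ _ v)
      map_smul' := fun r (a : A) ↦ (congrArg (· • v) (s.map_mul_left r a)).trans (mul_smul _ _ v) }

/-- The trace `v ↦ ∑ i, x i • v (y i)` on the coextension of scalars of an `A`-module; it is the
counit of the adjunction between coextension and restriction. -/
noncomputable def trace (v : (coextendScalars ι).obj ((restrictScalars ι).obj N)) : N :=
  ∑ i, s.x i • (v (s.y i) : N)

theorem sum_smul_apply_s6 (v : (coextendScalars ι).obj X) (a : A) :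
    ∑ i, s.τ (a * s.x i) • v (s.y i) = v a :=
  (coextendScalars_apply_sum_map_mul v _ _).symm.trans (congrArg v (s.sum_map_mul a))

theorem coextend_smul (r : R) (v : X) : s.coextend (r • v) = ι r • s.coextend v :=
  ModuleCat.CoextendScalars.ext <| LinearMap.ext fun a : A ↦ by
    calc s.τ a • r • v
      _ = s.τ (a * ι r) • v := by rw [s.map_mul_right, mul_smul]

theorem trace_coextend (z : N) :
    s.trace (s.coextend (X := (restrictScalars ι).obj N) z) = z := by
  calc ∑ i, s.x i • ι (s.τ (s.y i)) • z
    _ = (∑ i, s.x i * ι (s.τ (s.y i * 1))) • z := by simp only [Finset.sum_smul, mul_smul, mul_one]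
    _ = z := by rw [s.sum_mul_map, one_smul]

theorem trace_smul (b : A) (v : (coextendScalars ι).obj ((restrictScalars ι).obj N)) :
    s.trace (b • v) = b • s.trace v := by
  calc ∑ i, s.x i • (v (s.y i * b) : N)
    _ = ∑ i, s.x i • ∑ j, ι (s.τ (s.y i * b * s.x j)) • (v (s.y j) : N) :=
      Finset.sum_congr rfl fun i _ ↦ congrArg (s.x i • ·) (s.sum_smul_apply_s6 v (s.y i * b)).symm
    _ = ∑ j, (∑ i, s.x i * ι (s.τ (s.y i * (b * s.x j)))) • (v (s.y j) : N) := by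
      simp only [Finset.smul_sum, Finset.sum_smul, mul_smul, mul_assoc]
      exact Finset.sum_comm
    _ = b • ∑ j, s.x j • (v (s.y j) : N) := by
      simp only [s.sum_mul_map, Finset.smul_sum, mul_smul]

theorem trace_add (v w : (coextendScalars ι).obj ((restrictScalars ι).obj N)) :
    s.trace (v + w) = s.trace v + s.trace w := by
  calc ∑ i, s.x i • ((v (s.y i) : N) + (w (s.y i) : N))
    _ = ∑ i, s.x i • (v (s.y i) : N) + ∑ i, s.x i • (w (s.y i) : N) := by
      simp only [smul_add, Finset.sum_add_distrib]

theorem trace_map {N' : ModuleCat.{u} A} (f : N ⟶ N')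
    (v : (coextendScalars ι).obj ((restrictScalars ι).obj N)) :
    s.trace ((coextendScalars ι).map ((restrictScalars ι).map f) v) = f (s.trace v) := by
  calc ∑ i, s.x i • f.hom (v (s.y i) : N)
    _ = ∑ i, f.hom (s.x i • (v (s.y i) : N)) :=
      Finset.sum_congr rfl fun i _ ↦ (f.hom.map_smul _ _).symm
    _ = f.hom (∑ i, s.x i • (v (s.y i) : N)) := (map_sum f.hom _ _).symm

/-- The unit `v ↦ (a ↦ τ a • v)` of the adjunction between coextension and restriction. -/
noncomputable def coextendHom (X : ModuleCat.{u} R) :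
    X ⟶ (restrictScalars ι).obj ((coextendScalars.{u, u, u} ι).obj X) :=
  ModuleCat.ofHom (Y := (restrictScalars ι).obj ((coextendScalars ι).obj X))
    { toFun := s.coextend
      map_add' := fun v w ↦ ModuleCat.CoextendScalars.ext <| LinearMap.ext fun a : A ↦
        smul_add (s.τ a) v w
      map_smul' := s.coextend_smul }

theorem trace_map_coextendHom (v : (coextendScalars.{u, u, u} ι).obj X) :
    s.trace ((coextendScalars ι).map (s.coextendHom X) v) = v :=
  ModuleCat.CoextendScalars.ext <| LinearMap.ext fun a : A ↦
    (coextendScalars_sum_apply (fun i ↦ s.x i • s.coextend (v (s.y i))) a).trans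
      (s.sum_smul_apply_s6 v a)

/-- Coextension of scalars along a Frobenius extension is left adjoint to restriction. -/
noncomputable def coextendRestrictScalarsAdj :
    coextendScalars.{u, u, u} ι ⊣ restrictScalars ι :=
  .mkOfUnitCounit
    { unit :=
        { app X := s.coextendHom X
          naturality X Y f := ModuleCat.hom_ext <| LinearMap.ext fun v ↦
            ModuleCat.CoextendScalars.ext <| LinearMap.ext fun a : A ↦
              (f.hom.map_smul (s.τ a) v).symm }
      counit :=
        { app N := ModuleCat.ofHom
            { toFun := s.trace, map_add' := s.trace_add, map_smul' := s.trace_smul }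
          naturality N N' f := ModuleCat.hom_ext <| LinearMap.ext <| s.trace_map f }
      left_triangle := by
        ext X : 2
        exact ModuleCat.hom_ext <| LinearMap.ext s.trace_map_coextendHom
      right_triangle := by
        ext N : 2
        exact ModuleCat.hom_ext <| LinearMap.ext s.trace_coextend }

end FrobeniusSystem_s6

theorem IsFrobeniusExtension.nonempty_frobeniusSystem (hF : IsFrobeniusExtension ι) :
    Nonempty (FrobeniusSystem_s6 ι) := by
  obtain ⟨-, τ, n, x, y, hl, hr, hx, hy⟩ := hF
  exact ⟨⟨τ, n, x, y, hl, hr, hx, hy⟩⟩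

end RestrictionOfScalars

section Transfer

variable {F : ModuleCat.{u} A ⥤ ModuleCat.{u} R} {H : ModuleCat.{u} R ⥤ ModuleCat.{u} A}

theorem IsGorensteinInjective.map [F.Faithful] [F.PreservesZeroMorphisms] (adj : F ⊣ H)
    (adj' : H ⊣ F) {M : ModuleCat.{u} A} (h : IsGorensteinInjective A M) :
    IsGorensteinInjective R (F.obj M) := by
  rw [isGorensteinInjective_iff] at h ⊢
  exact ⟨h.1.map adj adj', fun n ↦ (injectiveExtVanishes_map_iff adj adj' n M).2 (h.2 n)⟩

theorem GIdimLE.map [F.Faithful] [F.PreservesZeroMorphisms] (adj : F ⊣ H) (adj' : H ⊣ F) {n : ℕ}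
    {M : ModuleCat.{u} A} (h : GIdimLE A n M) : GIdimLE R n (F.obj M) := by
  induction n generalizing M with
  | zero => exact IsGorensteinInjective.map adj adj' h
  | succ n ih =>
    obtain ⟨S, rfl, hS, h₂, h₃⟩ := gIdimLE_succ_iff.1 h
    exact gIdimLE_succ_iff.2
      ⟨S.map F, rfl, shortExact_map_of_adjunctions adj adj' hS, h₂.map adj adj', ih h₃⟩

theorem stmt6_general [F.Faithful] (adj : F ⊣ H) (adj' : H ⊣ F) (M : ModuleCat.{u} A)
    (h : GIdim A M ≠ ⊤) : GIdim A M = GIdim R (F.obj M) := by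
  have := adj.isLeftAdjoint
  obtain ⟨n, hn⟩ := gIdim_ne_top_iff.1 h
  have hF : GIdim R (F.obj M) ≠ ⊤ := gIdim_ne_top_iff.2 ⟨n, hn.map adj adj'⟩
  refine eq_of_forall_ge_iff fun k ↦ ?_
  induction k with
  | top => simp only [le_top]
  | coe m =>
    simp only [gIdim_le_natCast_iff_injectiveExtVanishes h,
      gIdim_le_natCast_iff_injectiveExtVanishes hF, injectiveExtVanishes_map_iff adj adj']

end Transfer

theorem stmt6 (ι : R →+* A) (hF : IsFrobeniusExtension ι)
    (M : Type u) [AddCommGroup M] [Module A M]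
    (h : GIdim A (ModuleCat.of A M) ≠ ⊤) :
    GIdim A (ModuleCat.of A M) = GIdim R (@ModuleCat.of R _ M _ (Module.compHom M ι)) := by
  obtain ⟨s⟩ := hF.nonempty_frobeniusSystem
  exact stmt6_general (ModuleCat.restrictCoextendScalarsAdj ι) s.coextendRestrictScalarsAdj
    (.of A M) h

end Statement
end

section
/- Let R ⊂ A be a split Frobenius extension of rings. Then the left Gorenstein global dimensions coincide: G-gldim(A) = G-gldim(R), i.e. the supremum of the Gorenstein projective dimensions of all left A-modules equals the supremum of the Gorenstein projective dimensions of all left R-modules (as elements of ℕ ∪ {∞}). -/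
universe u

section Frobenius

variable {R A : Type u} [Ring R] [Ring A]

/-- A ring extension `ι : R →+* A` is split if `R` is a direct summand of `A` as an
`R`-`R`-bimodule, i.e. there is an `R`-`R`-bimodule homomorphism `π : A → R` with
`π ∘ ι = id`. -/
def IsSplitExtension (ι : R →+* A) : Prop :=
  ∃ π : A →+ R,
    (∀ (r : R) (a : A), π (ι r * a) = r * π a) ∧
    (∀ (a : A) (r : R), π (a * ι r) = π a * r) ∧
    (∀ r : R, π (ι r) = r)

end Frobenius

/-- The (left) Gorenstein global dimension of a ring: the supremum of the Gorenstein
projective dimensions of all left modules. -/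
noncomputable def GGldim (Λ : Type u) [Ring Λ] : ℕ∞ :=
  ⨆ M : ModuleCat.{u} Λ, GPdim Λ M

/-!
Write `spli` for the supremum of the projective dimensions of the injective objects, and `silp` for
the supremum of the injective dimensions of the projective objects. In an abelian category with
enough projectives and injectives, every object has Gorenstein projective dimension at most `n` if
and only if `spli` and `silp` are both at most `n`. For necessity, an object of Gorenstein
projective dimension at most `n` embeds into one of projective dimension at most `n`, and its `Ext`
groups to projectives vanish above `n`. For sufficiency, embed `M` into an injective `I` with
cokernel `N`; by the horseshoe lemma an `n`-th syzygy of `M` embeds into one of `I`, which is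
projective, with cokernel an `n`-th syzygy of `N`, so that `n`-th syzygies are Gorenstein
projective.

Suppose `F` is both left and right adjoint to a faithful functor `G`. Then `F` and `G` are exact and
preserve projectives and injectives, and an injective (projective) object is a retract of its image
under `G` followed by `F`, so the bounds on `spli` and `silp` pass along `F`. For a Frobenius
extension this applies to restriction and coextension of scalars, which are adjoint to each other
on both sides, in both directions: restriction is always faithful, and coextension is so when `A` is
a generator of the category of left `R`-modules, in particular when the extension splits.
-/

open CategoryTheory Abelian Limits ZeroObject

universe w w' v v' u' u''

namespace Gorenstein

section Extensions

variable {C : Type u'} [Category.{v} C] [Abelian C]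

lemma shortExact_of_isPushout_left {S : ShortComplex C} (hS : S.ShortExact) {Y P : C}
    {l : S.X₁ ⟶ Y} {r : S.X₂ ⟶ P} {b : Y ⟶ P} (sq : IsPushout S.f l r b) :
    (ShortComplex.mk b (sq.desc S.g 0 (by simp)) (by simp)).ShortExact := by
  have := hS.mono_f
  have := hS.epi_g
  have : Mono b := Abelian.mono_inr_of_isColimit S.f l sq.isColimit
  have : Epi (sq.desc S.g 0 (by simp)) := epi_of_epi_fac (sq.inl_desc S.g 0 (by simp))
  refine ⟨ShortComplex.exact_of_g_is_cokernel _ ?_⟩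
  refine CokernelCofork.IsColimit.ofπ' _ _ fun {T} k (hk : b ≫ k = 0) => ?_
  refine ⟨hS.exact.desc (r ≫ k) (by rw [sq.w_assoc, hk, comp_zero]), ?_⟩
  apply sq.hom_ext <;> simp [hk]

lemma shortExact_of_isPushout_right {S : ShortComplex C} (hS : S.ShortExact) {E P : C}
    {t : S.X₂ ⟶ E} [Mono t] {r : E ⟶ P} {b : S.X₃ ⟶ P} (sq : IsPushout t S.g r b) :
    (ShortComplex.mk (S.f ≫ t) r (by simp [sq.w])).ShortExact := by
  have := hS.mono_f
  have := hS.epi_g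
  have : Epi r := sq.epi_inl_of_epi
  have : Mono (S.f ≫ t) := mono_comp _ _
  refine ⟨ShortComplex.exact_of_g_is_cokernel _ ?_⟩
  refine CokernelCofork.IsColimit.ofπ' _ _ fun {T} k (hk : (S.f ≫ t) ≫ k = 0) => ?_
  exact ⟨sq.desc k (hS.exact.desc (t ≫ k) (by rw [← Category.assoc, hk])) (by simp), by simp⟩

/-- `IsExtension X E Y`: there is a short exact sequence `0 ⟶ X ⟶ E ⟶ Y ⟶ 0`. -/
def IsExtension (X E Y : C) : Prop :=
  ∃ (f : X ⟶ E) (g : E ⟶ Y) (w : f ≫ g = 0), (ShortComplex.mk f g w).ShortExact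

namespace IsExtension

lemma op {X E Y : C} :
    IsExtension X E Y → IsExtension (Opposite.op Y) (Opposite.op E) (Opposite.op X)
  | ⟨_, _, _, hS⟩ => ⟨_, _, _, hS.op⟩

lemma unop {X E Y : Cᵒᵖ} : IsExtension X E Y → IsExtension Y.unop E.unop X.unop
  | ⟨_, _, _, hS⟩ => ⟨_, _, _, hS.unop⟩

lemma of_epi {E Y : C} (g : E ⟶ Y) [Epi g] : IsExtension (kernel g) E Y :=
  ⟨kernel.ι g, g, kernel.condition g, ⟨ShortComplex.exact_kernel g⟩⟩

lemma of_mono {X E : C} (f : X ⟶ E) [Mono f] : IsExtension X E (cokernel f) :=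
  ⟨f, cokernel.π f, cokernel.condition f, ⟨ShortComplex.exact_cokernel f⟩⟩

lemma of_isos {X X' E Y Y' : C} (e : X ≅ X') (e' : Y ≅ Y') :
    IsExtension X E Y → IsExtension X' E Y'
  | ⟨f, g, w, hS⟩ => ⟨e.inv ≫ f, g ≫ e'.hom, by simp [reassoc_of% w],
      ShortComplex.shortExact_of_iso (ShortComplex.isoMk e (Iso.refl E) e') hS⟩

lemma id_zero (X : C) : IsExtension X X 0 :=
  ⟨𝟙 X, 0, comp_zero, ShortComplex.Splitting.shortExact { r := 𝟙 X, s := 0 }⟩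

lemma exists_pushout {K G M H G' : C} (h : IsExtension K G M) (h' : IsExtension K H G') :
    ∃ D, IsExtension G D G' ∧ IsExtension H D M := by
  obtain ⟨f, g, w, hS⟩ := h
  obtain ⟨f', g', w', hS'⟩ := h'
  have sq := IsPushout.of_hasPushout f f'
  exact ⟨pushout f f', ⟨_, _, _, shortExact_of_isPushout_left hS' sq.flip⟩,
    ⟨_, _, _, shortExact_of_isPushout_left hS sq⟩⟩

lemma exists_quotient {H D M P L : C} (h : IsExtension H D M) (h' : IsExtension D P L) :
    ∃ E, IsExtension H P E ∧ IsExtension M E L := by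
  obtain ⟨f, g, w, hS⟩ := h
  obtain ⟨f', g', w', hS'⟩ := h'
  have := hS'.mono_f
  have sq := IsPushout.of_hasPushout f' g
  exact ⟨pushout f' g, ⟨_, _, _, shortExact_of_isPushout_right hS sq⟩,
    ⟨_, _, _, shortExact_of_isPushout_left hS' sq⟩⟩

lemma symm_of_splitting {S : ShortComplex C} (s : S.Splitting) : IsExtension S.X₃ S.X₂ S.X₁ :=
  ⟨s.s, s.r, s.s_r, ShortComplex.Splitting.shortExact
    { r := S.g, s := S.f, f_r := s.s_g, s_g := s.f_r, id := (add_comm _ _).trans s.id }⟩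

lemma exists_cohorseshoe {X₁ X₂ X₃ P₁ P₃ L₁ L₃ : C} (h : IsExtension X₁ X₂ X₃)
    (h₁ : IsExtension X₁ P₁ L₁) (h₃ : IsExtension X₃ P₃ L₃)
    (hsymm : ∀ E, IsExtension P₁ E X₃ → IsExtension X₃ E P₁) :
    ∃ P₂ L₂, IsExtension P₃ P₂ P₁ ∧ IsExtension X₂ P₂ L₂ ∧ IsExtension L₁ L₂ L₃ := by
  obtain ⟨E, hX₂E, hP₁E⟩ := exists_pushout h h₁
  obtain ⟨P₂, hEP₂, hP₂⟩ := exists_pushout (hsymm E hP₁E) h₃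
  obtain ⟨L₂, hX₂, hL₂⟩ := exists_quotient hX₂E hEP₂
  exact ⟨P₂, L₂, hP₂, hX₂, hL₂⟩

lemma symm_of_projective {X E P : C} [Projective P] :
    IsExtension X E P → IsExtension P E X
  | ⟨f, g, w, hS⟩ =>
    have : Projective (ShortComplex.mk f g w).X₃ := ‹Projective P›
    symm_of_splitting hS.splittingOfProjective

lemma projective_middle {P E P' : C} [Projective P] [Projective P'] :
    IsExtension P E P' → Projective E
  | ⟨f, g, w, hS⟩ => by
    have : Projective (ShortComplex.mk f g w).X₃ := ‹Projective P'›
    have e : E ≅ P ⊞ P' := hS.splittingOfProjective.isoBinaryBiproduct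
    exact Projective.of_iso e.symm inferInstance

lemma exists_horseshoe {X₁ X₂ X₃ P₁ P₃ K₁ K₃ : C} [Projective P₃] (h : IsExtension X₁ X₂ X₃)
    (h₁ : IsExtension K₁ P₁ X₁) (h₃ : IsExtension K₃ P₃ X₃) :
    ∃ K₂ P₂, IsExtension P₃ P₂ P₁ ∧ IsExtension K₂ P₂ X₂ ∧ IsExtension K₁ K₂ K₃ := by
  obtain ⟨P₂, K₂, hP, hX, hK⟩ := exists_cohorseshoe h.op h₃.op h₁.op
    fun E hE => (symm_of_projective hE.unop).op
  exact ⟨K₂.unop, P₂.unop, hP.unop, hX.unop, hK.unop⟩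

end IsExtension

end Extensions

section ExtVanishing

variable {C : Type u'} [Category.{v} C] [Abelian C] [HasExt.{w} C]

lemma exists_extension_of_ext_eq_zero {S : ShortComplex C} (hS : S.ShortExact) {Q : C}
    (h : ∀ e : Ext S.X₃ Q 1, e = 0) (g : S.X₁ ⟶ Q) : ∃ g' : S.X₂ ⟶ Q, S.f ≫ g' = g := by
  obtain ⟨y, hy⟩ := Ext.contravariant_sequence_exact₁ hS Q (Ext.mk₀ g) rfl (h _)
  obtain ⟨g', rfl⟩ := Ext.homEquiv₀.symm.surjective y
  refine ⟨g', Ext.homEquiv₀.symm.injective ?_⟩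
  rwa [Ext.homEquiv₀_symm_apply, Ext.mk₀_comp_mk₀] at hy

lemma ext_eq_zero_of_exists_extension {S : ShortComplex C} (hS : S.ShortExact)
    [Projective S.X₂] {Q : C} (h : ∀ g : S.X₁ ⟶ Q, ∃ g' : S.X₂ ⟶ Q, S.f ≫ g' = g)
    (e : Ext S.X₃ Q 1) : e = 0 := by
  obtain ⟨x, rfl⟩ :=
    Ext.contravariant_sequence_exact₃ hS Q e (Ext.eq_zero_of_projective _) (n₀ := 0) rfl
  obtain ⟨g, rfl⟩ := Ext.homEquiv₀.symm.surjective x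
  obtain ⟨g', rfl⟩ := h g
  rw [Ext.homEquiv₀_symm_apply, ← Ext.mk₀_comp_mk₀]
  exact hS.extClass_comp_assoc (Ext.mk₀ g')

lemma IsExtension.symm_of_ext_eq_zero {X E Y : C} (h : ∀ e : Ext Y X 1, e = 0) :
    IsExtension X E Y → IsExtension Y E X
  | ⟨_, _, _, hS⟩ =>
    have ⟨r, hr⟩ := exists_extension_of_ext_eq_zero hS h (𝟙 X)
    symm_of_splitting (ShortComplex.Splitting.ofExactOfRetraction _ hS.exact r hr hS.epi_g)

/-- `ExtVanishesAbove n X`: the groups `Ext^k(X, Q)` vanish for all `k > n` and all projective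
`Q`. -/
def ExtVanishesAbove (n : ℕ) (X : C) : Prop :=
  ∀ ⦃Q : C⦄ [Projective Q] ⦃k : ℕ⦄, n < k → ∀ e : Ext X Q k, e = 0

namespace ExtVanishesAbove

lemma of_projective (n : ℕ) (P : C) [Projective P] : ExtVanishesAbove n P := by
  rintro Q _ (_ | k) hk e
  · exact absurd hk n.not_lt_zero
  · exact e.eq_zero_of_projective

lemma left {n : ℕ} {X Y Z : C} : IsExtension X Y Z → ExtVanishesAbove n Y →
    ExtVanishesAbove (n + 1) Z → ExtVanishesAbove n X := by
  rintro ⟨_, _, _, hS⟩ hY hZ Q _ k hk x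
  obtain ⟨y, rfl⟩ :=
    Ext.contravariant_sequence_exact₁ hS Q x (n₁ := 1 + k) rfl (hZ (by lia) _)
  rw [hY hk y, Ext.comp_zero]

lemma right {n : ℕ} {X Y Z : C} : IsExtension X Y Z → ExtVanishesAbove (n + 1) Y →
    ExtVanishesAbove n X → ExtVanishesAbove (n + 1) Z := by
  rintro ⟨_, _, _, hS⟩ hY hX Q _ k hk z
  obtain ⟨j, rfl⟩ : ∃ j, k = 1 + j := ⟨k - 1, by lia⟩
  obtain ⟨x, rfl⟩ := Ext.contravariant_sequence_exact₃ hS Q z (hY hk _) (n₀ := j) rfl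
  rw [hX (by lia) x, Ext.comp_zero]

lemma middle {n : ℕ} {X Y Z : C} : IsExtension X Y Z → ExtVanishesAbove n X →
    ExtVanishesAbove n Z → ExtVanishesAbove n Y := by
  rintro ⟨_, _, _, hS⟩ hX hZ Q _ k hk y
  obtain ⟨z, rfl⟩ := Ext.contravariant_sequence_exact₂ hS Q y (hX hk _)
  rw [hZ hk z, Ext.comp_zero]

lemma mono {m n : ℕ} {X : C} (h : ExtVanishesAbove m X) (hmn : m ≤ n) : ExtVanishesAbove n X :=
  fun _ _ _ hk => h (hmn.trans_lt hk)

end ExtVanishesAbove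

end ExtVanishing

section GProjective

variable {C : Type u'} [Category.{v} C] [Abelian C] [HasExt.{w} C]

/-- Gorenstein projective objects, defined coinductively so that no complex has to be carried
around: `X` is Gorenstein projective if it belongs to a class `T` of objects `Y` with
`Ext^k(Y, Q) = 0` for `k > 0` and `Q` projective, each of which is the kernel of an epimorphism
from a projective object to an object of `T`. -/
def GProjective (X : C) : Prop :=
  ∃ T : ObjectProperty C, T X ∧ ∀ Y, T Y →
    ExtVanishesAbove 0 Y ∧ ∃ P Z, Projective P ∧ IsExtension Y P Z ∧ T Z

namespace GProjective

lemma extVanishesAbove {X : C} : GProjective X → ExtVanishesAbove 0 X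
  | ⟨_, hX, hT⟩ => (hT X hX).1

lemma exists_cosyzygy {X : C} :
    GProjective X → ∃ P Y, Projective P ∧ IsExtension X P Y ∧ GProjective Y
  | ⟨T, hX, hT⟩ =>
    have ⟨P, Y, hP, h, hY⟩ := (hT X hX).2
    ⟨P, Y, hP, h, T, hY, hT⟩

lemma of_projective (P : C) [Projective P] : GProjective P :=
  ⟨Projective, ‹_›, fun Y _ =>
    ⟨.of_projective 0 Y, Y, 0, ‹_›, .id_zero Y, inferInstance⟩⟩

lemma syzygy {X P Y : C} [Projective P] (h : IsExtension X P Y) (hY : GProjective Y) :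
    GProjective X := by
  refine ⟨fun X => ∃ P Y, Projective P ∧ IsExtension X P Y ∧ GProjective Y,
    ⟨P, Y, ‹_›, h, hY⟩, ?_⟩
  rintro X ⟨P, Y, _, h, hY⟩
  exact ⟨.left h (.of_projective 0 P) (hY.extVanishesAbove.mono zero_le_one),
    P, Y, ‹_›, h, hY.exists_cosyzygy⟩

lemma of_iso {X Y : C} (e : X ≅ Y) (hX : GProjective X) : GProjective Y :=
  have ⟨_, _, _, h, hZ⟩ := hX.exists_cosyzygy
  .syzygy (h.of_isos e (Iso.refl _)) hZ

lemma extension {X E Y : C} (h : IsExtension X E Y) (hX : GProjective X) (hY : GProjective Y) :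
    GProjective E := by
  refine ⟨fun E => ∃ X Y, IsExtension X E Y ∧ GProjective X ∧ GProjective Y,
    ⟨X, Y, h, hX, hY⟩, ?_⟩
  rintro E ⟨X, Y, h, hX, hY⟩
  refine ⟨.middle h hX.extVanishesAbove hY.extVanishesAbove, ?_⟩
  obtain ⟨P, X', _, hXP, hX'⟩ := hX.exists_cosyzygy
  obtain ⟨Q, Y', _, hYQ, hY'⟩ := hY.exists_cosyzygy
  obtain ⟨D, E', hD, hE, hE'⟩ := h.exists_cohorseshoe hXP hYQ
    fun _ => IsExtension.symm_of_ext_eq_zero (hY.extVanishesAbove zero_lt_one)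
  exact ⟨D, E', hD.projective_middle, hE, X', Y', hE', hX', hY'⟩

end GProjective

end GProjective

section GProjDimLE

variable {C : Type u'} [Category.{v} C] [Abelian C] [HasExt.{w} C]

/-- `GProjDimLE n X`: the object `X` has a resolution `0 ⟶ G_n ⟶ ⋯ ⟶ G_0 ⟶ X ⟶ 0` by Gorenstein
projective objects. -/
inductive GProjDimLE : ℕ → C → Prop
  | zero {X : C} : GProjective X → GProjDimLE 0 X
  | succ {n : ℕ} {K G X : C} :
      IsExtension K G X → GProjective G → GProjDimLE n K → GProjDimLE (n + 1) X

namespace GProjDimLE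

lemma extVanishesAbove {n : ℕ} {X : C} (h : GProjDimLE n X) : ExtVanishesAbove n X := by
  induction h with
  | zero hX => exact hX.extVanishesAbove
  | succ hS hG _ ih => exact .right hS (hG.extVanishesAbove.mono (Nat.zero_le _)) ih

lemma of_iso {n : ℕ} {X Y : C} (e : X ≅ Y) : GProjDimLE n X → GProjDimLE n Y
  | .zero hX => .zero (hX.of_iso e)
  | .succ h hG hK => .succ (h.of_isos (Iso.refl _) e) hG hK

lemma mono [EnoughProjectives C] {m n : ℕ} {X : C} (h : GProjDimLE m X) (hmn : m ≤ n) :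
    GProjDimLE n X := by
  induction h generalizing n with
  | @zero X hX =>
    induction n generalizing X with
    | zero => exact .zero hX
    | succ n ih =>
      have hS := IsExtension.of_epi (Projective.π X)
      exact .succ hS (.of_projective _) (ih (.syzygy hS hX) n.zero_le)
  | succ hS hG _ ih =>
    obtain ⟨n, rfl⟩ := Nat.exists_eq_add_of_le' (Nat.succ_le_of_lt hmn)
    exact .succ hS hG (ih (by lia))

lemma exists_isExtension {n : ℕ} {X : C} (h : GProjDimLE n X) :
    ∃ H G, HasProjectiveDimensionLE H n ∧ GProjective G ∧ IsExtension X H G := by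
  induction h with
  | zero hX =>
    obtain ⟨P, Y, _, hP, hY⟩ := hX.exists_cosyzygy
    exact ⟨P, Y, inferInstance, hY, hP⟩
  | @succ n K G X hS hG _ ih =>
    obtain ⟨H, G', _, hG', hK⟩ := ih
    obtain ⟨D, hD, hX⟩ := hS.exists_pushout hK
    obtain ⟨P, L, _, hDP, hL⟩ := (GProjective.extension hD hG hG').exists_cosyzygy
    obtain ⟨E, ⟨f, g, w, hE⟩, hXE⟩ := hX.exists_quotient hDP
    exact ⟨E, L, hE.hasProjectiveDimensionLT_X₃ (n + 1) ‹_› inferInstance, hL, hXE⟩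

end GProjDimLE

end GProjDimLE

section IsSyzygy

variable {C : Type u'} [Category.{v} C] [Abelian C]

/-- `IsSyzygy n X M`: the object `X` is an `n`-th syzygy of `M`, i.e. there is an exact sequence
`0 ⟶ X ⟶ P_{n-1} ⟶ ⋯ ⟶ P_0 ⟶ M ⟶ 0` with all `P_i` projective. -/
inductive IsSyzygy : ℕ → C → C → Prop
  | zero (X : C) : IsSyzygy 0 X X
  | succ {n : ℕ} {X K P M : C} :
      IsExtension K P M → Projective P → IsSyzygy n X K → IsSyzygy (n + 1) X M

namespace IsSyzygy

lemma exists_isSyzygy [EnoughProjectives C] (n : ℕ) (M : C) : ∃ X, IsSyzygy n X M := by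
  induction n generalizing M with
  | zero => exact ⟨M, .zero M⟩
  | succ n ih =>
    obtain ⟨X, hX⟩ := ih (kernel (Projective.π M))
    exact ⟨X, .succ (.of_epi _) inferInstance hX⟩

lemma exists_cosyzygy [EnoughProjectives C] {n : ℕ} {X M I N : C} (hX : IsSyzygy n X M)
    (h : IsExtension M I N) (hI : HasProjectiveDimensionLE I n) :
    ∃ P Y, Projective P ∧ IsExtension X P Y ∧ IsSyzygy n Y N := by
  induction hX generalizing I N with
  | zero X =>
    have : Projective I := (projective_iff_hasProjectiveDimensionLE_zero I).2 hI
    exact ⟨I, N, this, h, .zero N⟩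
  | @succ n X K P M hK _ _ ih =>
    obtain ⟨J, D, hD, ⟨f, g, w, hI'⟩, hJ⟩ :=
      h.exists_horseshoe hK (.of_epi (Projective.π N))
    have := hD.projective_middle
    have := (hI'.hasProjectiveDimensionLT_X₃_iff n ‹_›).1 hI
    obtain ⟨Q, Y, hQ, hXQ, hY⟩ := ih hJ this
    exact ⟨Q, Y, hQ, hXQ, .succ (.of_epi _) inferInstance hY⟩

variable [HasExt.{w} C]

lemma gProjDimLE {n : ℕ} {X M : C} (h : IsSyzygy n X M) (hX : GProjective X) :
    GProjDimLE n M := by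
  induction h with
  | zero => exact .zero hX
  | succ hK _ _ ih => exact .succ hK (.of_projective _) (ih hX)

lemma extVanishesAbove_zero {n : ℕ} {X M : C} (h : IsSyzygy n X M) (hM : ExtVanishesAbove n M) :
    ExtVanishesAbove 0 X := by
  induction h with
  | zero => exact hM
  | succ hK _ _ ih => exact ih (.left hK (.of_projective _ _) hM)

end IsSyzygy

end IsSyzygy

section SpliSilp

/-- `spli C ≤ n`: every injective object of `C` has projective dimension at most `n`. -/
def SpliLE (C : Type u') [Category.{v} C] [Abelian C] (n : ℕ) : Prop :=
  ∀ (I : C) [Injective I], HasProjectiveDimensionLE I n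

/-- `silp C ≤ n`: every projective object of `C` has injective dimension at most `n`. -/
def SilpLE (C : Type u') [Category.{v} C] [Abelian C] (n : ℕ) : Prop :=
  ∀ (P : C) [Projective P], HasInjectiveDimensionLE P n

variable {C : Type u'} [Category.{v} C] [Abelian C] {n : ℕ}

lemma hasProjectiveDimensionLE_of_mono {I H : C} [Injective I] (f : I ⟶ H) [Mono f]
    [HasProjectiveDimensionLE H n] : HasProjectiveDimensionLE I n :=
  Retract.hasProjectiveDimensionLT
    { i := f, r := Injective.factorThru (𝟙 I) f, retract := Injective.comp_factorThru _ _ } _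

lemma hasInjectiveDimensionLE_of_epi {H P : C} [Projective P] (g : H ⟶ P) [Epi g]
    [HasInjectiveDimensionLE H n] : HasInjectiveDimensionLE P n :=
  Retract.hasInjectiveDimensionLT
    { i := Projective.factorThru (𝟙 P) g, r := g, retract := Projective.factorThru_comp _ _ } _

variable [HasExt.{w} C]

lemma silpLE_iff_forall_extVanishesAbove : SilpLE C n ↔ ∀ X : C, ExtVanishesAbove n X :=
  ⟨fun h _ Q _ _ hk e => have := h Q; e.eq_zero_of_hasInjectiveDimensionLT (n + 1) hk,
    fun h _ _ => HasInjectiveDimensionLT.mk fun _ hk X e => h X hk e⟩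

variable [EnoughProjectives C] [EnoughInjectives C]

lemma IsSyzygy.gProjective (hspli : SpliLE C n) (hsilp : SilpLE C n) {X M : C}
    (h : IsSyzygy n X M) : GProjective X := by
  refine ⟨fun X => ∃ M, IsSyzygy n X M, ⟨M, h⟩, ?_⟩
  rintro X ⟨M, h⟩
  obtain ⟨P, Y, hP, hX, hY⟩ := h.exists_cosyzygy (.of_mono (Injective.ι M)) (hspli _)
  have hM := silpLE_iff_forall_extVanishesAbove.1 hsilp M
  exact ⟨h.extVanishesAbove_zero hM, P, Y, hP, hX, _, hY⟩

theorem forall_gProjDimLE_iff : (∀ X : C, GProjDimLE n X) ↔ SpliLE C n ∧ SilpLE C n := by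
  constructor
  · intro h
    refine ⟨fun I _ => ?_, silpLE_iff_forall_extVanishesAbove.2 fun X => (h X).extVanishesAbove⟩
    obtain ⟨H, G, _, -, f, g, w, hS⟩ := (h I).exists_isExtension
    have : Mono f := hS.mono_f
    exact hasProjectiveDimensionLE_of_mono f
  · rintro ⟨hspli, hsilp⟩ M
    obtain ⟨X, hX⟩ := IsSyzygy.exists_isSyzygy n M
    exact hX.gProjDimLE (hX.gProjective hspli hsilp)

end SpliSilp

section Transfer

variable {C : Type u'} [Category.{v} C] [Abelian C] {D : Type u''} [Category.{v'} D] [Abelian D]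

section Exact

variable (F : C ⥤ D) [F.PreservesZeroMorphisms] [PreservesFiniteLimits F]
  [PreservesFiniteColimits F]

lemma hasProjectiveDimensionLE_obj [EnoughProjectives C] [F.PreservesProjectiveObjects] {n : ℕ}
    {X : C} (hX : HasProjectiveDimensionLE X n) : HasProjectiveDimensionLE (F.obj X) n := by
  induction n generalizing X with
  | zero =>
    have := (projective_iff_hasProjectiveDimensionLE_zero X).2 hX
    exact (projective_iff_hasProjectiveDimensionLE_zero _).1 (F.projective_obj X)
  | succ n ih =>
    obtain ⟨f, g, w, hS⟩ := IsExtension.of_epi (Projective.π X)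
    have hK := (hS.hasProjectiveDimensionLT_X₃_iff n (Projective.projective_over X)).1 hX
    exact ((hS.map_of_exact F).hasProjectiveDimensionLT_X₃_iff n
      (F.projective_obj (Projective.over X))).2 (ih hK)

lemma hasInjectiveDimensionLE_obj [EnoughInjectives C] [F.PreservesInjectiveObjects] {n : ℕ}
    {X : C} (hX : HasInjectiveDimensionLE X n) : HasInjectiveDimensionLE (F.obj X) n := by
  induction n generalizing X with
  | zero =>
    have := injective_iff_hasInjectiveDimensionLT_one.2 hX
    exact injective_iff_hasInjectiveDimensionLT_one.1 (F.injective_obj X)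
  | succ n ih =>
    obtain ⟨f, g, w, hS⟩ := IsExtension.of_mono (Injective.ι X)
    have hK := (hS.hasInjectiveDimensionLT_X₃_iff n (Injective.injective_under X)).2 hX
    exact ((hS.map_of_exact F).hasInjectiveDimensionLT_X₃_iff n
      (F.injective_obj (Injective.under X))).1 (ih hK)

end Exact

variable {F : C ⥤ D} {G : D ⥤ C} {n : ℕ}

lemma SpliLE.of_adjunctions [EnoughProjectives C] (h : SpliLE C n) (adj : F ⊣ G) (adj' : G ⊣ F)
    [G.Faithful] : SpliLE D n := by
  intro I _
  have := adj.isLeftAdjoint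
  have := adj.isRightAdjoint
  have := adj'.isLeftAdjoint
  have := adj'.isRightAdjoint
  have := Functor.preservesProjectiveObjects_of_adjunction_of_preservesEpimorphisms adj
  have := Functor.preservesInjectiveObjects_of_adjunction_of_preservesMonomorphisms adj
  have : HasProjectiveDimensionLE ((G ⋙ F).obj I) n :=
    hasProjectiveDimensionLE_obj F (h (G.obj I))
  exact hasProjectiveDimensionLE_of_mono (adj'.unit.app I)

lemma SilpLE.of_adjunctions [EnoughInjectives C] (h : SilpLE C n) (adj : F ⊣ G) (adj' : G ⊣ F)
    [G.Faithful] : SilpLE D n := by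
  intro P _
  have := adj.isLeftAdjoint
  have := adj.isRightAdjoint
  have := adj'.isLeftAdjoint
  have := adj'.isRightAdjoint
  have := Functor.preservesProjectiveObjects_of_adjunction_of_preservesEpimorphisms adj'
  have := Functor.preservesInjectiveObjects_of_adjunction_of_preservesMonomorphisms adj'
  have : HasInjectiveDimensionLE ((G ⋙ F).obj P) n :=
    hasInjectiveDimensionLE_obj F (h (G.obj P))
  exact hasInjectiveDimensionLE_of_epi (adj.counit.app P)

variable [HasExt.{w} C] [HasExt.{w'} D] [EnoughProjectives C] [EnoughInjectives C]
  [EnoughProjectives D] [EnoughInjectives D]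

theorem forall_gProjDimLE_of_adjunctions (adj : F ⊣ G) (adj' : G ⊣ F) [G.Faithful]
    (h : ∀ X : C, GProjDimLE n X) (Y : D) : GProjDimLE n Y :=
  have ⟨hspli, hsilp⟩ := forall_gProjDimLE_iff.1 h
  forall_gProjDimLE_iff.2 ⟨hspli.of_adjunctions adj adj', hsilp.of_adjunctions adj adj'⟩ Y

end Transfer

section TotallyAcyclic

/-- A totally acyclic complex of projective objects, encoded by the short exact sequences
`0 ⟶ Z (i + 1) ⟶ P (i + 1) ⟶ Z i ⟶ 0` it splices; its differentials are `p i ≫ ι i`. Exactness of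
`Hom(-, Q)` for `Q` projective becomes the extension property of `ι i : Z i ⟶ P i`. -/
structure TotallyAcyclicComplex (C : Type u') [Category.{v} C] [Abelian C] where
  P : ℤ → C
  Z : ℤ → C
  ι (i : ℤ) : Z i ⟶ P i
  p (i : ℤ) : P (i + 1) ⟶ Z i
  zero (i : ℤ) : ι (i + 1) ≫ p i = 0
  shortExact (i : ℤ) : (ShortComplex.mk (ι (i + 1)) (p i) (zero i)).ShortExact
  projective (i : ℤ) : Projective (P i)
  exists_extension (i : ℤ) {Q : C} [Projective Q] (g : Z i ⟶ Q) : ∃ g' : P i ⟶ Q, ι i ≫ g' = g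

attribute [instance] TotallyAcyclicComplex.projective

lemma exists_int_seq {α : Type*} {r : α → α → Prop} (hl : ∀ x, ∃ y, r y x) (hr : ∀ x, ∃ y, r x y)
    (x : α) : ∃ s : ℤ → α, s 0 = x ∧ ∀ i, r (s (i + 1)) (s i) := by
  choose l hl using hl
  choose t ht using hr
  let s : ℤ → α
    | .ofNat n => l^[n] x
    | .negSucc n => t^[n + 1] x
  refine ⟨s, rfl, ?_⟩
  rintro (n | _ | n)
  · change r (l^[n + 1] x) (l^[n] x)
    rw [Function.iterate_succ_apply']
    exact hl _
  · exact ht x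
  · change r (t^[n + 1] x) (t^[n + 2] x)
    rw [Function.iterate_succ_apply' t (n + 1)]
    exact ht _

variable {C : Type u'} [Category.{v} C] [Abelian C] [HasExt.{w} C]

lemma GProjective.exists_totallyAcyclicComplex [EnoughProjectives C] {X : C} (hX : GProjective X) :
    ∃ T : TotallyAcyclicComplex C, T.Z 0 = X := by
  obtain ⟨s, hs₀, hs⟩ := exists_int_seq (α := {X : C // GProjective X})
    (r := fun X Y => ∃ P, Projective P ∧ IsExtension X.1 P Y.1)
    (fun Y => ⟨⟨_, .syzygy (.of_epi (Projective.π Y.1)) Y.2⟩, _, inferInstance, .of_epi _⟩)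
    (fun X => have ⟨P, Y, hP, h, hY⟩ := X.2.exists_cosyzygy; ⟨⟨Y, hY⟩, P, hP, h⟩) ⟨X, hX⟩
  have hs' (i : ℤ) : ∃ (P : C) (ι : (s i).1 ⟶ P), Projective P ∧ ∀ j, j + 1 = i →
      ∃ (p : P ⟶ (s j).1) (w : ι ≫ p = 0), (ShortComplex.mk ι p w).ShortExact := by
    obtain ⟨i, rfl⟩ : ∃ j, i = j + 1 := ⟨i - 1, by lia⟩
    obtain ⟨P, hP, ι, p, w, hS⟩ := hs i
    refine ⟨P, ι, hP, fun j hj => ?_⟩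
    obtain rfl : j = i := by lia
    exact ⟨p, w, hS⟩
  choose P ι hP hs' using hs'
  choose p w hS using fun i => hs' (i + 1) i rfl
  refine ⟨⟨P, fun i => (s i).1, ι, p, w, hS, hP, fun i Q _ g => ?_⟩, congrArg Subtype.val hs₀⟩
  obtain ⟨i, rfl⟩ : ∃ j, i = j + 1 := ⟨i - 1, by lia⟩
  exact exists_extension_of_ext_eq_zero (hS i)
    ((s i).2.extVanishesAbove zero_lt_one) g

namespace TotallyAcyclicComplex

variable (T : TotallyAcyclicComplex C)

lemma extVanishesAbove_zero_Z (i : ℤ) : ExtVanishesAbove 0 (T.Z i) := by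
  rintro Q _ (_ | k) hk e
  · exact absurd hk (lt_irrefl 0)
  induction k generalizing i with
  | zero =>
    exact ext_eq_zero_of_exists_extension (T.shortExact i) (T.exists_extension (i + 1)) e
  | succ k ih =>
    obtain ⟨x, rfl⟩ := Ext.contravariant_sequence_exact₃ (T.shortExact i) Q e
      (Ext.eq_zero_of_projective _) (n₀ := k + 1) (by lia)
    rw [ih (i + 1) k.succ_pos x, Ext.comp_zero]

lemma gProjective_Z (i : ℤ) : GProjective (T.Z i) := by
  refine ⟨fun X => ∃ i, X = T.Z i, ⟨i, rfl⟩, ?_⟩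
  rintro _ ⟨i, rfl⟩
  obtain ⟨i, rfl⟩ : ∃ j, i = j + 1 := ⟨i - 1, by lia⟩
  exact ⟨T.extVanishesAbove_zero_Z _, T.P (i + 1), T.Z i, inferInstance,
    ⟨_, _, _, T.shortExact i⟩, i, rfl⟩

end TotallyAcyclicComplex

end TotallyAcyclic

section Module

variable {R : Type u} [Ring R]

lemma isExtension_ker {M N : ModuleCat.{u} R} (f : M →ₗ[R] N) (hf : Function.Surjective f) :
    IsExtension (ModuleCat.of R (LinearMap.ker f)) M N :=
  ⟨_, _, _, LinearMap.shortExact_shortComplexKer hf⟩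

namespace TotallyAcyclicComplex

variable (T : TotallyAcyclicComplex (ModuleCat.{u} R))

lemma ι_injective (i : ℤ) : Function.Injective (T.ι i).hom := by
  obtain ⟨i, rfl⟩ : ∃ j, i = j + 1 := ⟨i - 1, by lia⟩
  exact (T.shortExact i).moduleCat_injective_f

lemma p_surjective (i : ℤ) : Function.Surjective (T.p i).hom :=
  (T.shortExact i).moduleCat_surjective_g

lemma range_ι (i : ℤ) :
    LinearMap.range (T.ι (i + 1)).hom = LinearMap.ker (T.p i ≫ T.ι i).hom := by
  rw [ModuleCat.hom_comp,
    LinearMap.ker_comp_of_ker_eq_bot _ (LinearMap.ker_eq_bot.2 (T.ι_injective i))]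
  exact (T.shortExact i).exact.moduleCat_range_eq_ker

lemma isGorensteinProjective_Z_zero : IsGorensteinProjective R (T.Z 0) := by
  refine ⟨T.P, fun i => (T.p i ≫ T.ι i).hom,
    fun i => (IsProjective.iff_projective _).2 (T.projective i), fun i => ?_, fun i => ?_,
    fun Q hQ i g hg => ?_,
    ⟨(LinearEquiv.ofInjective (T.ι (-1 + 1)).hom (T.ι_injective _)).trans
      (LinearEquiv.ofEq _ _ (T.range_ι (-1)))⟩⟩
  · rw [← ModuleCat.hom_comp, Category.assoc, reassoc_of% T.zero i, zero_comp, comp_zero,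
      ModuleCat.hom_zero]
  · change LinearMap.range (T.p (i + 1) ≫ T.ι (i + 1)).hom = LinearMap.ker (T.p i ≫ T.ι i).hom
    rw [← T.range_ι, ModuleCat.hom_comp,
      LinearMap.range_comp_of_range_eq_top _ (LinearMap.range_eq_top.2 (T.p_surjective _))]
  · have hιg : T.ι (i + 1) ≫ ModuleCat.ofHom g = 0 := by
      ext z
      obtain ⟨x, rfl⟩ := T.p_surjective (i + 1) z
      exact LinearMap.congr_fun hg x
    have : Projective Q := (IsProjective.iff_projective _).1 hQ
    have := (T.shortExact i).epi_g
    obtain ⟨h, hh⟩ := T.exists_extension i ((T.shortExact i).exact.desc (ModuleCat.ofHom g) hιg)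
    refine ⟨h.hom, ?_⟩
    rw [← ModuleCat.hom_comp, Category.assoc, hh]
    exact congrArg ModuleCat.Hom.hom ((T.shortExact i).exact.g_desc _ hιg)

end TotallyAcyclicComplex

open LinearMap in
lemma exists_totallyAcyclicComplex_of_isGorensteinProjective {M : ModuleCat.{u} R} :
    IsGorensteinProjective R M →
      ∃ T : TotallyAcyclicComplex (ModuleCat.{u} R), Nonempty (M ≅ T.Z 0) := by
  rintro ⟨P, f, hP, hff, hex, hQ, ⟨e⟩⟩
  have hpι (i : ℤ) : ModuleCat.ofHom (range (f (i + 1))).subtype ≫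
      ModuleCat.ofHom (f i).rangeRestrict = 0 := by
    ext ⟨_, x, rfl⟩ : 2
    exact Subtype.ext (LinearMap.congr_fun (hff i) x)
  refine ⟨{ P := P
            Z i := ModuleCat.of R (range (f i))
            ι i := ModuleCat.ofHom (range (f i)).subtype
            p i := ModuleCat.ofHom (f i).rangeRestrict
            zero := hpι
            shortExact := fun i => ?_
            projective := fun i => (IsProjective.iff_projective _).1 (hP i)
            exists_extension := fun i Q hQproj g => ?_ },
    ⟨(e.trans (LinearEquiv.ofEq _ _ (hex (-1)).symm)).toModuleIso⟩⟩
  · refine ShortComplex.ShortExact.mk' ?_ ?_ ?_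
    · rw [ShortComplex.moduleCat_exact_iff_range_eq_ker]
      exact (Submodule.range_subtype _).trans ((hex i).trans (ker_rangeRestrict _).symm)
    · exact (ModuleCat.mono_iff_injective _).2 (Submodule.injective_subtype _)
    · exact (ModuleCat.epi_iff_surjective _).2 (surjective_rangeRestrict _)
  · obtain ⟨h, hh⟩ := hQ Q ((IsProjective.iff_projective _).2 hQproj) i
      (g.hom ∘ₗ (f i).rangeRestrict) (by
        ext x
        exact (congrArg g.hom (Subtype.ext (LinearMap.congr_fun (hff i) x))).trans (map_zero _))
    refine ⟨ModuleCat.ofHom h, ?_⟩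
    ext ⟨_, x, rfl⟩
    exact LinearMap.congr_fun hh x

lemma isGorensteinProjective_iff (M : ModuleCat.{u} R) :
    IsGorensteinProjective R M ↔ GProjective M := by
  constructor
  · intro hM
    obtain ⟨T, ⟨e⟩⟩ := exists_totallyAcyclicComplex_of_isGorensteinProjective hM
    exact (T.gProjective_Z 0).of_iso e.symm
  · intro hM
    obtain ⟨T, rfl⟩ := hM.exists_totallyAcyclicComplex
    exact T.isGorensteinProjective_Z_zero

lemma gpdimLE_iff (n : ℕ) (M : ModuleCat.{u} R) : GPdimLE R n M ↔ GProjDimLE n M := by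
  induction n generalizing M with
  | zero => exact (isGorensteinProjective_iff M).trans ⟨.zero, fun | .zero hM => hM⟩
  | succ n ih =>
    constructor
    · rintro ⟨G, f, hf, hG, hK⟩
      exact .succ (isExtension_ker f hf) ((isGorensteinProjective_iff G).1 hG) ((ih _).1 hK)
    · rintro (_ | ⟨⟨_, g, _, hS⟩, hG, hK⟩)
      refine ⟨_, g.hom, hS.moduleCat_surjective_g, (isGorensteinProjective_iff _).2 hG, ?_⟩
      exact (ih _).2 (hK.of_iso
        (hS.fIsKernel.conePointUniqueUpToIso (ModuleCat.kernelIsLimit g)))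

lemma gpdim_le_iff (n : ℕ) (M : ModuleCat.{u} R) : GPdim R M ≤ n ↔ GProjDimLE n M := by
  constructor
  · intro h
    obtain ⟨_, ⟨m, rfl, hm⟩, hmn⟩ :=
      sInf_lt_iff.1 (h.trans_lt (Nat.cast_lt.2 n.lt_succ_self))
    exact ((gpdimLE_iff m M).1 hm).mono (Nat.lt_succ_iff.1 (Nat.cast_lt.1 hmn))
  · exact fun h => sInf_le ⟨n, rfl, (gpdimLE_iff n M).2 h⟩

lemma ggldim_le_iff (n : ℕ) : GGldim R ≤ n ↔ ∀ M : ModuleCat.{u} R, GProjDimLE n M :=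
  iSup_le_iff.trans (forall_congr' (gpdim_le_iff n))

end Module

section FrobeniusExtension

open ModuleCat

variable {R A : Type u} [Ring R] [Ring A] {ι : R →+* A}

/-- A left `R`-linear map `A → R`, as a linear map on the restriction of scalars of `A`. -/
def restrictScalarsDual (π : A →+ R) (hπ : ∀ (r : R) (a : A), π (ι r * a) = r * π a) :
    (restrictScalars.{u} ι).obj (of A A) →ₗ[R] R where
  toFun := π
  map_add' := π.map_add
  map_smul' := hπ

lemma isSeparator_restrictScalars (π : A →+ R) (hπ : ∀ (r : R) (a : A), π (ι r * a) = r * π a)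
    (hπ_one : π 1 = 1) : IsSeparator ((restrictScalars.{u} ι).obj (of A A)) := by
  refine (isSeparator_def _).2 fun M N f g hfg => ?_
  ext m
  have h : f.hom (π 1 • m) = g.hom (π 1 • m) :=
    congr($(hfg (ofHom (X := (restrictScalars ι).obj (of A A))
      ((restrictScalarsDual π hπ).smulRight m))).hom (1 : A))
  rwa [hπ_one, one_smul] at h

/-- Evaluation `Hom_R(A, M) → M` at the elements of `A`. -/
noncomputable def coextendEval {M : ModuleCat.{u} R} :
    (coextendScalars.{u, u, u} ι).obj M →+ A →+ M where
  toFun φ := (CoextendScalars.equiv ι M φ).toAddMonoidHom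
  map_zero' := rfl
  map_add' _ _ := rfl

/-- `coextendEval` for the restriction of scalars of an `A`-module `N`, with values in `N`. -/
noncomputable def coextendRestrictEval {N : ModuleCat.{u} A} :
    (coextendScalars.{u, u, u} ι).obj ((restrictScalars.{u} ι).obj N) →+ A →+ N :=
  coextendEval (M := (restrictScalars ι).obj N)

lemma coextendEval_ext {M : ModuleCat.{u} R} {φ ψ : (coextendScalars.{u, u, u} ι).obj M}
    (h : ∀ a, coextendEval φ a = coextendEval ψ a) : φ = ψ :=
  CoextendScalars.ext (LinearMap.ext h)

lemma coextendEval_map_mul {M : ModuleCat.{u} R} (φ : (coextendScalars.{u, u, u} ι).obj M) (r : R)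
    (a : A) : coextendEval φ (ι r * a) = r • coextendEval φ a :=
  (CoextendScalars.equiv ι M φ).map_smul r a

lemma faithful_coextendScalars (hA : IsSeparator ((restrictScalars.{u} ι).obj (of A A))) :
    (coextendScalars.{u, u, u} ι).Faithful where
  map_injective {M N f g} hfg := (isSeparator_def _).1 hA _ _ fun h => by
    ext a
    exact congr(coextendEval ($(congrArg ModuleCat.Hom.hom hfg)
      ((CoextendScalars.equiv ι M).symm h.hom)) a)

/-- A Frobenius system for `ι : R →+* A`: an `R`-`R`-bimodule homomorphism `τ : A → R` together with
dual bases `x`, `y`. -/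
structure FrobeniusSystem (ι : R →+* A) where
  τ : A →+ R
  n : ℕ
  x : Fin n → A
  y : Fin n → A
  τ_map_mul (r : R) (a : A) : τ (ι r * a) = r * τ a
  τ_mul_map (a : A) (r : R) : τ (a * ι r) = τ a * r
  sum_mul_map (a : A) : ∑ i, x i * ι (τ (y i * a)) = a
  sum_map_mul (a : A) : ∑ i, ι (τ (a * x i)) * y i = a

namespace FrobeniusSystem

variable (S : FrobeniusSystem ι)

lemma coextendEval_eq_sum {M : ModuleCat.{u} R} (φ : (coextendScalars.{u, u, u} ι).obj M) (a : A) :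
    coextendEval φ a = ∑ i, S.τ (a * S.x i) • coextendEval φ (S.y i) := by
  conv_lhs => rw [← S.sum_map_mul a]
  simp only [map_sum, coextendEval_map_mul]

/-- The map `M → Hom_R(A, M)`, `m ↦ (a ↦ τ a • m)`. -/
noncomputable def unit (M : ModuleCat.{u} R) :
    M →ₗ[R] (restrictScalars.{u} ι).obj ((coextendScalars.{u, u, u} ι).obj M) where
  toFun m := (CoextendScalars.equiv ι M).symm ((restrictScalarsDual S.τ S.τ_map_mul).smulRight m)
  map_add' m m' := coextendEval_ext fun a => smul_add (S.τ a) m m'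
  map_smul' r m := coextendEval_ext fun a => by
    change S.τ a • r • m = S.τ (a * ι r) • m
    rw [S.τ_mul_map, mul_smul]

/-- The map `Hom_R(A, N) → N`, `φ ↦ ∑ i, x i • φ (y i)`. -/
noncomputable def counit (N : ModuleCat.{u} A) :
    (coextendScalars.{u, u, u} ι).obj ((restrictScalars.{u} ι).obj N) →ₗ[A] N where
  toFun φ := ∑ i, S.x i • coextendRestrictEval φ (S.y i)
  map_add' φ ψ := by
    simp only [map_add, AddMonoidHom.add_apply, smul_add, Finset.sum_add_distrib]
  map_smul' s φ := calc
    ∑ i, S.x i • coextendRestrictEval φ (S.y i * s)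
    _ = ∑ i, S.x i • ∑ k, ι (S.τ (S.y i * s * S.x k)) • coextendRestrictEval φ (S.y k) :=
      Finset.sum_congr rfl fun i _ =>
        congrArg (S.x i • · : N → N) (S.coextendEval_eq_sum φ (S.y i * s))
    _ = ∑ k, (∑ i, S.x i * ι (S.τ (S.y i * (s * S.x k)))) • coextendRestrictEval φ (S.y k) := by
      simp only [Finset.smul_sum, Finset.sum_smul, mul_smul, mul_assoc]
      exact Finset.sum_comm
    _ = s • ∑ k, S.x k • coextendRestrictEval φ (S.y k) := by
      simp only [S.sum_mul_map, mul_smul, Finset.smul_sum]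

lemma counit_unit (N : ModuleCat.{u} A) (m : N) :
    S.counit N (S.unit ((restrictScalars.{u} ι).obj N) m) = m := calc
  ∑ i, S.x i • ι (S.τ (S.y i)) • m
  _ = (∑ i, S.x i * ι (S.τ (S.y i * 1))) • m := by
    simp only [Finset.sum_smul, mul_smul, mul_one]
  _ = m := by rw [S.sum_mul_map, one_smul]

/-- For a Frobenius extension, coextension of scalars is left adjoint to restriction. -/
noncomputable def adjunction : coextendScalars.{u, u, u} ι ⊣ restrictScalars.{u} ι :=
  Adjunction.mkOfUnitCounit
    { unit :=
        { app M := ofHom (Y := (restrictScalars ι).obj ((coextendScalars ι).obj M)) (S.unit M)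
          naturality M N g := by
            ext m
            exact coextendEval_ext fun a => (map_smul g.hom (S.τ a) m).symm }
      counit :=
        { app N := ofHom (S.counit N)
          naturality M N g := by
            ext (φ : (coextendScalars ι).obj ((restrictScalars ι).obj M))
            change ∑ i, S.x i • g.hom (coextendRestrictEval φ (S.y i)) =
              g.hom (∑ i, S.x i • coextendRestrictEval φ (S.y i))
            simp only [map_sum, map_smul] }
      left_triangle := by
        ext M φ
        refine coextendEval_ext fun a => ?_
        exact congr($(map_sum (coextendEval (M := M)) _ _) a).trans
          ((AddMonoidHom.finsetSum_apply _ _ _).trans (S.coextendEval_eq_sum φ a).symm)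
      right_triangle := by
        ext N m
        exact S.counit_unit N m }

end FrobeniusSystem

end FrobeniusExtension

end Gorenstein

open Gorenstein

theorem stmt10_general {R A : Type u} [Ring R] [Ring A] (ι : R →+* A) (hF : IsFrobeniusExtension ι)
    (hA : IsSeparator ((ModuleCat.restrictScalars.{u} ι).obj (ModuleCat.of A A))) :
    GGldim A = GGldim R := by
  obtain ⟨-, τ, n, x, y, hl, hr, hx, hy⟩ := hF
  let adj := FrobeniusSystem.adjunction ⟨τ, n, x, y, hl, hr, hx, hy⟩
  let adj' := ModuleCat.restrictCoextendScalarsAdj.{u, u, u} ι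
  have := faithful_coextendScalars hA
  refine WithTop.eq_of_forall_le_coe_iff fun n => ?_
  exact (ggldim_le_iff n).trans (Iff.trans
    ⟨forall_gProjDimLE_of_adjunctions adj' adj, forall_gProjDimLE_of_adjunctions adj adj'⟩
    (ggldim_le_iff n).symm)

section Statement

variable {R A : Type u} [Ring R] [Ring A]

theorem stmt10 (ι : R →+* A) (hF : IsFrobeniusExtension ι) (hS : IsSplitExtension ι) :
    GGldim A = GGldim R := by
  obtain ⟨π, hπ, -, hπι⟩ := hS
  exact stmt10_general ι hF (isSeparator_restrictScalars π hπ (by rw [← map_one ι, hπι]))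

end Statement
end
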